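/- Let p be an odd prime. If p ≡ 1 (mod 4), write p = x^2 + 4y^2 with integers x, y; then Σ_{n=0}^{p−1} n^2·T_n/4^n ≡ −4y^2 (mod p^3) and Σ_{n=0}^{p−1} n^3·T_n/4^n ≡ 2y^2 + p/4 + p^2/(64y^2) (mod p^3). If p ≡ 3 (mod 4), then Σ_{n=0}^{p−1} n^2·T_n/4^n ≡ −(1/4)R_1(p) − (1/2)p (mod p^2) and Σ_{n=0}^{p−1} n^3·T_n/4^n ≡ (3/8)R_1(p) + (1/2)p (mod p^2). -/

import Mathlib

/-- `a ≡ b (mod p^r)` for rationals: the numerator of `a - b` in lowest terms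
is divisible by `p^r`. -/
def ratCongr (p r : ℕ) (a b : ℚ) : Prop := (p : ℤ)^r ∣ (a - b).num
/-- `R_1(p) = (2p + 2 - 2^(p-1)) * C((p-1)/2, ⌊p/4⌋)^2`. -/
def R1 (p : ℕ) : ℚ :=
  (2*(p:ℚ) + 2 - 2^(p-1)) * (((p-1)/2).choose (p/4) : ℚ)^2

/-- `T_n = Σ_{k=0}^{n} C(n,k)^2·C(2k,n)^2`. -/
def seqT (n : ℕ) : ℚ :=
  ∑ k ∈ Finset.range (n+1), (n.choose k : ℚ)^2 * ((2*k).choose n : ℚ)^2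

/-!
Both sides of `T_n / 4 ^ n = ∑ k, C(n + 2k, 4k) C(4k, 2k) C(2k, k)² / 16 ^ k` satisfy the same
second order recurrence. For fixed `k` the weighted sums over `n < p` of the new summand telescope,
so with `p = 2m + 1` the second and third moments are combinations of sums
`∑ k ≤ m, c k / (a k + b)` with denominators `2k + 1`, `4k + 1` and `4k + 3`. Here `c k` is
congruent modulo `p²` to the coefficient of `x ^ k` in the shifted Legendre polynomial
`P_m(1 - 2x)`, and for the latter the sum is the product
`∏ j < m, (a (j + 1) - b) / ∏ j ≤ m, (a j + b)`.

For `p = 4k + 3` this product is evaluated modulo `p²`, which gives `R_1(p)`. For `p = 4k + 1` the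
product is needed modulo `p³`, and is compared there with the Jacobi sum `u` of the Teichmüller
characters of orders `4` and `2`, which is a sum of binomial coefficients. Expanding every product
`(n p + 1) ⋯ (n p + r)` that occurs as a truncated exponential in `p`, the unknown harmonic numbers
cancel: the sums over `4k + 1` and `4k + 3`, multiplied by `p`, are `u²` and `-v²` modulo `p³`,
where `u v = p`. Finally `u` and `v` are the images of a Gaussian integer of norm `p` with odd real
part and of its conjugate, so that `(u + v)² = 4 x²` by uniqueness of `p = x² + 4y²`.
-/

namespace SeqT

open Finset
open scoped Nat

/-- The reciprocal factorial `1 / z!` extended to all integers by `0` at negative `z`, as for the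
reciprocal Gamma function. Binomial coefficients written with it satisfy their contiguity relations
without side conditions. -/
def invFactorial (z : ℤ) : ℚ := if 0 ≤ z then 1 / (z.toNat)! else 0

lemma invFactorial_natCast (n : ℕ) : invFactorial n = 1 / n ! := by
  simp [invFactorial]

lemma factorial_mul_invFactorial (n : ℕ) : (n ! : ℚ) * invFactorial n = 1 := by
  rw [invFactorial_natCast]
  field_simp

lemma invFactorial_of_neg {z : ℤ} (hz : z < 0) : invFactorial z = 0 := by
  simp [invFactorial, hz]

lemma invFactorial_sub_one (z : ℤ) : invFactorial (z - 1) = z * invFactorial z := by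
  rcases lt_or_ge z 0 with hz | hz
  · rw [invFactorial_of_neg hz, invFactorial_of_neg (by omega), mul_zero]
  lift z to ℕ using hz
  cases z with
  | zero => simp [invFactorial]
  | succ n =>
    rw [Nat.cast_succ, add_sub_cancel_right, ← Nat.cast_succ, invFactorial_natCast,
      invFactorial_natCast, Nat.factorial_succ]
    push_cast
    field_simp

lemma invFactorial_sub_two (z : ℤ) : invFactorial (z - 2) = z * (z - 1) * invFactorial z := by
  rw [show z - 2 = z - 1 - 1 by ring, invFactorial_sub_one, invFactorial_sub_one]
  push_cast
  ring

lemma cast_choose_eq (n k : ℕ) :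
    (n.choose k : ℚ) = n ! * invFactorial k * invFactorial ((n : ℤ) - k) := by
  rcases lt_or_ge n k with h | h
  · rw [Nat.choose_eq_zero_of_lt h, invFactorial_of_neg (z := (n : ℤ) - k) (by omega)]
    simp
  · rw [← Nat.cast_sub h, invFactorial_natCast, invFactorial_natCast, Nat.cast_choose ℚ h]
    field_simp

/-- `C(n, k) C(2k, n)`, whose square is the summand of `T_n`. -/
def seqTRoot (n k : ℕ) : ℚ := n.choose k * (2 * k).choose n

lemma seqTRoot_eq (n k : ℕ) :
    seqTRoot n k = (2 * k)! * invFactorial k * invFactorial ((n : ℤ) - k) *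
      invFactorial (2 * (k : ℤ) - n) := by
  rw [seqTRoot, cast_choose_eq, cast_choose_eq]
  push_cast
  linear_combination ((2 * k)! * invFactorial k * invFactorial ((n : ℤ) - k) *
      invFactorial (2 * (k : ℤ) - n)) * factorial_mul_invFactorial n

lemma seqTRoot_of_lt {n k : ℕ} (h : n < k) : seqTRoot n k = 0 := by
  simp [seqTRoot, Nat.choose_eq_zero_of_lt h]

/-- The Zeilberger certificate of `∑ k, seqTRoot n k ^ 2`. -/
def seqTCert (n k : ℕ) : ℚ :=
  seqTRoot (n + 2) k ^ 2 * (4 * (2 * n + 3) * (n + 2 - k) ^ 2 - (n + 2) ^ 3)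

lemma seqTRoot_telescope (n k : ℕ) :
    (n + 2 : ℚ) ^ 3 * seqTRoot (n + 2) k ^ 2
      - 4 * (2 * n + 3) * (3 * (n + 1) ^ 2 + 3 * (n + 1) + 1) * seqTRoot (n + 1) k ^ 2
      + 16 * (n + 1) ^ 3 * seqTRoot n k ^ 2 = seqTCert n (k + 1) - seqTCert n k := by
  -- All four terms are polynomial multiples of `b`, in `j = n + 2 - k` and `l = 2 k - n`.
  set b : ℚ := (2 * k)! * invFactorial k * invFactorial ((n : ℤ) + 2 - k) *
    invFactorial (2 * (k : ℤ) - n) with hb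
  have hnk : seqTRoot n k = b * ((n + 2 - k) * (n + 1 - k)) := by
    rw [seqTRoot_eq, show (n : ℤ) - k = n + 2 - k - 2 by ring, invFactorial_sub_two, hb]
    push_cast
    ring
  have hnk₁ : seqTRoot (n + 1) k = b * ((n + 2 - k) * (2 * k - n)) := by
    rw [seqTRoot_eq, show ((n + 1 : ℕ) : ℤ) - k = n + 2 - k - 1 by push_cast; ring,
      show 2 * (k : ℤ) - (n + 1 : ℕ) = 2 * k - n - 1 by push_cast; ring,
      invFactorial_sub_one, invFactorial_sub_one, hb]
    push_cast
    ring
  have hnk₂ : seqTRoot (n + 2) k = b * ((2 * k - n) * (2 * k - n - 1)) := by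
    rw [seqTRoot_eq, show ((n + 2 : ℕ) : ℤ) - k = n + 2 - k by push_cast; ring,
      show 2 * (k : ℤ) - (n + 2 : ℕ) = 2 * k - n - 2 by push_cast; ring,
      invFactorial_sub_two, hb]
    push_cast
    ring
  have hnk₃ : seqTRoot (n + 2) (k + 1) = b * (2 * (2 * k + 1) * (n + 2 - k)) := by
    have hk := invFactorial_sub_one (k + 1)
    rw [add_sub_cancel_right] at hk
    rw [seqTRoot_eq, show ((n + 2 : ℕ) : ℤ) - (k + 1 : ℕ) = n + 2 - k - 1 by push_cast; ring,
      show 2 * ((k + 1 : ℕ) : ℤ) - (n + 2 : ℕ) = 2 * k - n by push_cast; ring,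
      invFactorial_sub_one, hb, hk, show 2 * (k + 1) = 2 * k + 1 + 1 by ring,
      Nat.factorial_succ, Nat.factorial_succ]
    push_cast
    ring
  rw [seqTCert, seqTCert, hnk, hnk₁, hnk₂, hnk₃]
  push_cast
  ring

lemma seqT_eq_sum {n N : ℕ} (h : n < N) : seqT n = ∑ k ∈ range N, seqTRoot n k ^ 2 := by
  simp only [seqT, ← mul_pow]
  refine sum_subset (range_subset_range.2 h) fun k _ hk => ?_
  exact pow_eq_zero_iff two_ne_zero |>.2 (seqTRoot_of_lt (by simpa using hk))

lemma seqT_add_two (n : ℕ) :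
    (n + 2 : ℚ) ^ 3 * seqT (n + 2) =
      4 * (2 * n + 3) * (3 * (n + 1) ^ 2 + 3 * (n + 1) + 1) * seqT (n + 1)
        - 16 * (n + 1) ^ 3 * seqT n := by
  have hsum := sum_congr rfl fun k (_ : k ∈ range (n + 3)) => seqTRoot_telescope n k
  have hzero : seqTCert n 0 = 0 := by simp [seqTCert, seqTRoot]
  have htop : seqTCert n (n + 3) = 0 := by
    simp [seqTCert, seqTRoot_of_lt (Nat.lt_succ_self (n + 2))]
  rw [sum_range_sub (seqTCert n), hzero, htop, sum_add_distrib, sum_sub_distrib, ← mul_sum,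
    ← mul_sum, ← mul_sum, ← seqT_eq_sum (by omega), ← seqT_eq_sum (by omega),
    ← seqT_eq_sum (by omega)] at hsum
  linarith

/-- `C(n+2k, 4k) C(4k, 2k) C(2k, k)² / 16^k`, the summand in a second formula for `T_n / 4^n`. -/
def scaledTerm (n k : ℕ) : ℚ :=
  (n + 2 * k).choose (4 * k) * (4 * k).choose (2 * k) * (2 * k).choose k ^ 2 / 16 ^ k

lemma scaledTerm_eq (n k : ℕ) :
    scaledTerm n k =
      (n + 2 * k)! * invFactorial ((n : ℤ) - 2 * k) * (invFactorial k ^ 4 / 16 ^ k) := by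
  rw [scaledTerm, cast_choose_eq, cast_choose_eq, cast_choose_eq,
    show ((n + 2 * k : ℕ) : ℤ) - (4 * k : ℕ) = n - 2 * k by push_cast; ring,
    show ((4 * k : ℕ) : ℤ) - (2 * k : ℕ) = (2 * k : ℕ) by push_cast; ring,
    show ((2 * k : ℕ) : ℤ) - k = k by push_cast; ring]
  calc _ = (n + 2 * k)! * invFactorial (n - 2 * k) * (invFactorial k ^ 4 / 16 ^ k) *
        ((4 * k)! * invFactorial (4 * k : ℕ)) * ((2 * k)! * invFactorial (2 * k : ℕ)) ^ 2 := by ring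
    _ = _ := by rw [factorial_mul_invFactorial, factorial_mul_invFactorial]; ring

lemma scaledTerm_of_lt {n k : ℕ} (h : n < 2 * k) : scaledTerm n k = 0 := by
  rw [scaledTerm, Nat.choose_eq_zero_of_lt (by omega)]
  simp

/-- The Zeilberger certificate of `∑ k, scaledTerm n k`. -/
def scaledCert (n k : ℕ) : ℚ :=
  (n + 2 * k)! * invFactorial ((n : ℤ) + 2 - 2 * k) * (invFactorial k ^ 4 / 16 ^ k) *
    (16 * k ^ 4) * (-2 * (2 * n + 3))

lemma scaledTerm_telescope (n k : ℕ) :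
    (n + 2 : ℚ) ^ 3 * scaledTerm (n + 2) k
      - (2 * n + 3) * (3 * (n + 1) ^ 2 + 3 * (n + 1) + 1) * scaledTerm (n + 1) k
      + (n + 1) ^ 3 * scaledTerm n k = scaledCert n (k + 1) - scaledCert n k := by
  -- All five terms are polynomial multiples of `b`.
  set b : ℚ := (n + 2 * k)! * invFactorial ((n : ℤ) + 2 - 2 * k) * (invFactorial k ^ 4 / 16 ^ k)
    with hb
  have hk := invFactorial_sub_one (k + 1)
  rw [add_sub_cancel_right] at hk
  have hnk : scaledTerm n k = b * ((n + 2 - 2 * k) * (n + 1 - 2 * k)) := by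
    rw [scaledTerm_eq, show (n : ℤ) - 2 * k = n + 2 - 2 * k - 2 by ring, invFactorial_sub_two, hb]
    push_cast
    ring
  have hnk₁ : scaledTerm (n + 1) k = b * ((n + 2 * k + 1) * (n + 2 - 2 * k)) := by
    rw [scaledTerm_eq, show ((n + 1 : ℕ) : ℤ) - 2 * k = n + 2 - 2 * k - 1 by push_cast; ring,
      invFactorial_sub_one, show n + 1 + 2 * k = n + 2 * k + 1 by ring, Nat.factorial_succ, hb]
    push_cast
    ring
  have hnk₂ : scaledTerm (n + 2) k = b * ((n + 2 * k + 1) * (n + 2 * k + 2)) := by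
    rw [scaledTerm_eq, show ((n + 2 : ℕ) : ℤ) - 2 * k = n + 2 - 2 * k by push_cast; ring,
      show n + 2 + 2 * k = n + 2 * k + 1 + 1 by ring, Nat.factorial_succ, Nat.factorial_succ, hb]
    push_cast
    ring
  have hcert : scaledCert n (k + 1) = b * ((n + 2 * k + 1) * (n + 2 * k + 2) *
      ((n + 2 - 2 * k) * (n + 1 - 2 * k)) * (-2 * (2 * n + 3))) := by
    rw [scaledCert, show (n : ℤ) + 2 - 2 * (k + 1 : ℕ) = n + 2 - 2 * k - 2 by push_cast; ring,
      invFactorial_sub_two, show n + 2 * (k + 1) = n + 2 * k + 1 + 1 by ring, Nat.factorial_succ,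
      Nat.factorial_succ, hb, hk, pow_succ]
    push_cast
    field_simp
    ring
  have hcert₀ : scaledCert n k = b * (16 * k ^ 4 * (-2 * (2 * n + 3))) := by
    rw [scaledCert, hb]
    ring
  rw [hnk, hnk₁, hnk₂, hcert, hcert₀]
  ring

lemma sum_scaledTerm_eq {n M N : ℕ} (hM : n < 2 * M) (hMN : M ≤ N) :
    ∑ k ∈ range M, scaledTerm n k = ∑ k ∈ range N, scaledTerm n k := by
  refine sum_subset (range_subset_range.2 hMN) fun k _ hk => scaledTerm_of_lt ?_
  rw [mem_range] at hk
  omega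

lemma sum_scaledTerm_add_two (n : ℕ) :
    (n + 2 : ℚ) ^ 3 * ∑ k ∈ range (n + 3), scaledTerm (n + 2) k =
      (2 * n + 3) * (3 * (n + 1) ^ 2 + 3 * (n + 1) + 1) * ∑ k ∈ range (n + 2), scaledTerm (n + 1) k
        - (n + 1) ^ 3 * ∑ k ∈ range (n + 1), scaledTerm n k := by
  have hsum := sum_congr rfl fun k (_ : k ∈ range (n + 3)) => scaledTerm_telescope n k
  have hzero : scaledCert n 0 = 0 := by simp [scaledCert]
  have htop : scaledCert n (n + 3) = 0 := by
    rw [scaledCert, invFactorial_of_neg (by push_cast; omega)]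
    ring
  rw [sum_range_sub (scaledCert n), hzero, htop, sum_add_distrib, sum_sub_distrib, ← mul_sum,
    ← mul_sum, ← mul_sum, ← sum_scaledTerm_eq (n := n + 1) (M := n + 2) (by omega) (by omega),
    ← sum_scaledTerm_eq (n := n) (M := n + 1) (by omega) (by omega)] at hsum
  linarith

lemma seqT_eq_four_pow_mul_sum (n : ℕ) :
    seqT n = 4 ^ n * ∑ k ∈ range (n + 1), scaledTerm n k := by
  induction n using Nat.twoStepInduction with
  | zero => simp [seqT, scaledTerm]
  | one => norm_num [seqT, scaledTerm, sum_range_succ, Nat.choose]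
  | more n h0 h1 =>
    have hn : ((n : ℚ) + 2) ^ 3 ≠ 0 := by positivity
    apply mul_left_cancel₀ hn
    rw [seqT_add_two, h0, h1]
    linear_combination -16 * 4 ^ n * sum_scaledTerm_add_two n

lemma seqT_div_four_pow {n M : ℕ} (h : n < 2 * M) :
    seqT n / 4 ^ n = ∑ k ∈ range M, scaledTerm n k := by
  rw [seqT_eq_four_pow_mul_sum, mul_div_cancel_left₀ _ (by positivity)]
  rcases le_total M (n + 1) with hM | hM
  · exact (sum_scaledTerm_eq h hM).symm
  · exact sum_scaledTerm_eq (by omega) hM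

lemma scaledTerm_succ_left (n k : ℕ) :
    scaledTerm (n + 1) k * (n + 1 - 2 * k) = scaledTerm n k * (n + 2 * k + 1) := by
  rw [scaledTerm_eq, scaledTerm_eq,
    show (n : ℤ) - 2 * k = (n + 1 : ℕ) - 2 * k - 1 by push_cast; ring,
    invFactorial_sub_one, show n + 1 + 2 * k = n + 2 * k + 1 by ring, Nat.factorial_succ]
  push_cast
  ring

lemma scaledTerm_succ_right (n k : ℕ) :
    scaledTerm n (k + 1) * (16 * (k + 1) ^ 4) =
      scaledTerm n k * ((n + 2 * k + 1) * (n + 2 * k + 2) * ((n - 2 * k) * (n - 2 * k - 1))) := by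
  have hk := invFactorial_sub_one (k + 1)
  rw [add_sub_cancel_right] at hk
  rw [scaledTerm_eq, scaledTerm_eq,
    show (n : ℤ) - 2 * (k + 1 : ℕ) = n - 2 * k - 2 by push_cast; ring,
    invFactorial_sub_two, show n + 2 * (k + 1) = n + 2 * k + 1 + 1 by ring, Nat.factorial_succ,
    Nat.factorial_succ, hk, pow_succ]
  push_cast
  field_simp
  ring

lemma sum_mul_scaledTerm {f g : ℕ → ℚ} {k : ℕ}
    (hfg : ∀ n : ℕ, f n = (n + 2 * k + 1) * g (n + 1) - (n - 2 * k) * g n) (N : ℕ) :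
    ∑ n ∈ range N, f n * scaledTerm n k = scaledTerm N k * (N - 2 * k) * g N := by
  induction N with
  | zero => cases k <;> simp [scaledTerm_of_lt]
  | succ N ih =>
    rw [sum_range_succ, ih, hfg]
    push_cast
    linear_combination -g (N + 1) * scaledTerm_succ_left N k

/-- The coefficient of `x ^ k` in the shifted Legendre polynomial `P_m(1 - 2x)`. -/
def legendreCoeff (m k : ℕ) : ℚ := (-1) ^ k * m.choose k * (m + k).choose k

lemma legendreCoeff_eq (m k : ℕ) :
    legendreCoeff m k = (-1) ^ k * (m + k)! * invFactorial ((m : ℤ) - k) * invFactorial k ^ 2 := by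
  rw [legendreCoeff, cast_choose_eq, cast_choose_eq,
    show ((m + k : ℕ) : ℤ) - k = m by push_cast; ring]
  linear_combination (-1) ^ k * (m + k)! * invFactorial ((m : ℤ) - k) * invFactorial k ^ 2 *
    factorial_mul_invFactorial m

lemma legendreCoeff_of_lt {m k : ℕ} (h : m < k) : legendreCoeff m k = 0 := by
  simp [legendreCoeff, Nat.choose_eq_zero_of_lt h]

lemma legendreCoeff_succ_left (m k : ℕ) :
    legendreCoeff (m + 1) k * (m + 1 - k) = legendreCoeff m k * (m + 1 + k) := by
  rw [legendreCoeff_eq, legendreCoeff_eq, show (m : ℤ) - k = (m + 1 : ℕ) - k - 1 by push_cast; ring,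
    invFactorial_sub_one, show m + 1 + k = m + k + 1 by ring, Nat.factorial_succ]
  push_cast
  ring

lemma legendreCoeff_succ_right (m k : ℕ) :
    legendreCoeff m (k + 1) * (k + 1) ^ 2 = -legendreCoeff m k * ((m - k) * (m + k + 1)) := by
  have hk := invFactorial_sub_one (k + 1)
  rw [add_sub_cancel_right] at hk
  rw [legendreCoeff_eq, legendreCoeff_eq, show (m : ℤ) - (k + 1 : ℕ) = m - k - 1 by push_cast; ring,
    invFactorial_sub_one, show m + (k + 1) = m + k + 1 by ring, Nat.factorial_succ, hk, pow_succ]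
  push_cast
  ring

lemma sum_legendreCoeff_add_succ (m : ℕ) :
    ∑ k ∈ range (m + 2), (legendreCoeff m k + legendreCoeff (m + 1) k) = 0 := by
  have htelescope (k : ℕ) :
      -((m + 1 : ℚ) ^ 2) * (legendreCoeff m k + legendreCoeff (m + 1) k) =
        ((k + 1 : ℕ) : ℚ) ^ 2 * (legendreCoeff m (k + 1) + legendreCoeff (m + 1) (k + 1)) -
          (k : ℚ) ^ 2 * (legendreCoeff m k + legendreCoeff (m + 1) k) := by
    have hm := legendreCoeff_succ_right m k
    have hm₁ := legendreCoeff_succ_right (m + 1) k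
    push_cast at hm₁ ⊢
    linear_combination -hm - hm₁ + legendreCoeff_succ_left m k
  have hsum := sum_range_sub (fun k : ℕ =>
    (k : ℚ) ^ 2 * (legendreCoeff m k + legendreCoeff (m + 1) k)) (m + 2)
  rw [← sum_congr rfl fun k _ => htelescope k, ← mul_sum, legendreCoeff_of_lt (by omega),
    legendreCoeff_of_lt (by omega)] at hsum
  have hm : (m + 1 : ℚ) ≠ 0 := by positivity
  simpa [hm] using hsum

/-- The sum `∑ k ≤ m, c k / (a k + b)`. -/
def fracSum (c : ℕ → ℚ) (m : ℕ) (a b : ℚ) : ℚ := ∑ k ∈ range (m + 1), c k / (a * k + b)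

lemma fracSum_legendreCoeff (m : ℕ) {a b : ℚ} (hab : ∀ k : ℕ, a * k + b ≠ 0) :
    fracSum (legendreCoeff m) m a b =
      (∏ j ∈ range m, (a * (j + 1) - b)) / ∏ j ∈ range (m + 1), (a * j + b) := by
  induction m with
  | zero => simp [fracSum, legendreCoeff]
  | succ m ih =>
    have hstep : (a * (m + 1) + b) * fracSum (legendreCoeff (m + 1)) (m + 1) a b -
        (a * (m + 1) - b) * fracSum (legendreCoeff m) m a b = 0 := by
      have hext : fracSum (legendreCoeff m) m a b = fracSum (legendreCoeff m) (m + 1) a b := by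
        rw [fracSum, fracSum, sum_range_succ _ (m + 1), legendreCoeff_of_lt (by omega)]
        simp
      rw [hext, fracSum, fracSum, mul_sum, mul_sum, ← sum_sub_distrib,
        ← sum_legendreCoeff_add_succ m]
      refine sum_congr rfl fun k _ => ?_
      have := hab k
      field_simp
      linear_combination a * legendreCoeff_succ_left m k
    have hm : a * (m + 1) + b ≠ 0 := mod_cast hab (m + 1)
    have hprod : ∏ j ∈ range (m + 1), (a * j + b) ≠ 0 := prod_ne_zero_iff.2 fun k _ => hab k
    rw [ih] at hstep
    rw [prod_range_succ, prod_range_succ _ (m + 1)]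
    push_cast
    field_simp at hstep ⊢
    linear_combination hstep

lemma fracSum_legendreCoeff_two_one (m : ℕ) :
    fracSum (legendreCoeff m) m 2 1 = 1 / (2 * m + 1) := by
  rw [fracSum_legendreCoeff m fun k => by positivity, prod_range_succ, div_mul_eq_div_div]
  have hprod : ∏ j ∈ range m, (2 * (j : ℚ) + 1) ≠ 0 := prod_ne_zero_iff.2 fun k _ => by positivity
  rw [prod_congr rfl fun (j : ℕ) _ => show 2 * ((j : ℚ) + 1) - 1 = 2 * j + 1 by ring,
    div_self hprod]

lemma fracSum_legendreCoeff_two_two {m : ℕ} (hm : 0 < m) :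
    fracSum (legendreCoeff m) m 2 2 = 0 := by
  rw [fracSum_legendreCoeff m fun k => by positivity,
    prod_eq_zero (mem_range.2 hm) (by simp), zero_div]

lemma fracSum_legendreCoeff_mul (m : ℕ) :
    fracSum (legendreCoeff m) m 4 1 * fracSum (legendreCoeff m) m 4 3 * ((4 * m + 1) * (4 * m + 3))
      = 1 := by
  rw [fracSum_legendreCoeff m fun k => by positivity,
    fracSum_legendreCoeff m fun k => by positivity,
    prod_range_succ, prod_range_succ]
  have h₁ : ∏ j ∈ range m, (4 * (j : ℚ) + 1) ≠ 0 := prod_ne_zero_iff.2 fun k _ => by positivity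
  have h₃ : ∏ j ∈ range m, (4 * (j : ℚ) + 3) ≠ 0 := prod_ne_zero_iff.2 fun k _ => by positivity
  rw [prod_congr rfl fun (j : ℕ) _ => show 4 * ((j : ℚ) + 1) - 1 = 4 * j + 3 by ring,
    prod_congr rfl fun (j : ℕ) _ => show 4 * ((j : ℚ) + 1) - 3 = 4 * j + 1 by ring]
  field_simp

/-- The Legendre coefficient perturbed by `∏ i < k, (1 - (2m+1)² / (2(i+1))²)`; the factors are
`1` modulo `p²` when `p = 2m + 1` is prime. -/
def perturbedCoeff (m k : ℕ) : ℚ :=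
  legendreCoeff m k * ∏ i ∈ range k, (1 - (2 * m + 1) ^ 2 / (4 * ((i : ℚ) + 1) ^ 2))

lemma scaledTerm_two_mul_add_one (m k : ℕ) :
    scaledTerm (2 * m + 1) k * ((2 * m + 1 : ℕ) - 2 * k) = (2 * m + 1) * perturbedCoeff m k := by
  induction k with
  | zero => simp [scaledTerm, perturbedCoeff, legendreCoeff]
  | succ k ih =>
    have ht := scaledTerm_succ_right (2 * m + 1) k
    have hl := legendreCoeff_succ_right m k
    have hk : (16 : ℚ) * (k + 1) ^ 4 ≠ 0 := by positivity
    rw [perturbedCoeff] at ih ⊢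
    rw [prod_range_succ]
    apply mul_right_cancel₀ hk
    push_cast at ih ht ⊢
    set P := ∏ i ∈ range k, (1 - (2 * (m : ℚ) + 1) ^ 2 / (4 * ((i : ℚ) + 1) ^ 2))
    have hlast : (1 - (2 * (m : ℚ) + 1) ^ 2 / (4 * ((k : ℚ) + 1) ^ 2)) * (4 * (k + 1) ^ 2) =
        4 * (k + 1) ^ 2 - (2 * m + 1) ^ 2 := by
      field_simp
    linear_combination (2 * (m : ℚ) + 1 - 2 * (k + 1)) * ht
      + 4 * (m - k) * (m + k + 1) * ((2 * m + 1) ^ 2 - 4 * (k + 1) ^ 2) * ih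
      - 4 * (2 * m + 1) * P * (4 * (k + 1) ^ 2 - (2 * m + 1) ^ 2) * hl
      - (2 * m + 1) * P * legendreCoeff m (k + 1) * 4 * (k + 1) ^ 2 * hlast

lemma sum_mul_seqT_div {f : ℕ → ℚ} {g : ℕ → ℕ → ℚ}
    (hfg : ∀ k n : ℕ, f n = (n + 2 * k + 1) * g k (n + 1) - (n - 2 * k) * g k n) (m : ℕ) :
    ∑ n ∈ range (2 * m + 1), f n * seqT n / 4 ^ n =
      (2 * m + 1) * ∑ k ∈ range (m + 1), perturbedCoeff m k * g k (2 * m + 1) := by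
  calc _ = ∑ n ∈ range (2 * m + 1), ∑ k ∈ range (m + 1), f n * scaledTerm n k := by
        refine sum_congr rfl fun n hn => ?_
        rw [mul_div_assoc, seqT_div_four_pow (M := m + 1) (by rw [mem_range] at hn; omega), mul_sum]
    _ = _ := by
        rw [sum_comm, mul_sum]
        refine sum_congr rfl fun k _ => ?_
        rw [sum_mul_scaledTerm (hfg k), scaledTerm_two_mul_add_one, mul_assoc]

lemma sum_sq_mul_seqT_div (m : ℕ) :
    ∑ n ∈ range (2 * m + 1), (n : ℚ) ^ 2 * seqT n / 4 ^ n =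
      (2 * m + 1) / 4 * (fracSum (perturbedCoeff m) m 4 1 - fracSum (perturbedCoeff m) m 4 3)
        + (2 * m + 1) ^ 3 * fracSum (perturbedCoeff m) m 4 3
        - (2 * m + 1) ^ 2 / 2 * fracSum (perturbedCoeff m) m 2 1 := by
  have hfg (k n : ℕ) : (n : ℚ) ^ 2 =
      (n + 2 * k + 1) * (1 / 4 / (4 * k + 1) - 1 / 4 / (4 * k + 3)
          + ((n + 1 : ℕ) : ℚ) ^ 2 / (4 * k + 3) - ((n + 1 : ℕ) : ℚ) / 2 / (2 * k + 1))
        - (n - 2 * k) * (1 / 4 / (4 * k + 1) - 1 / 4 / (4 * k + 3)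
          + (n : ℚ) ^ 2 / (4 * k + 3) - (n : ℚ) / 2 / (2 * k + 1)) := by
    push_cast
    field_simp
    ring
  rw [sum_mul_seqT_div (g := fun k n => 1 / 4 / (4 * k + 1) - 1 / 4 / (4 * k + 3)
    + (n : ℚ) ^ 2 / (4 * k + 3) - (n : ℚ) / 2 / (2 * k + 1)) hfg]
  simp only [fracSum, mul_sum, ← sum_sub_distrib, ← sum_add_distrib]
  refine sum_congr rfl fun k _ => ?_
  push_cast
  ring

lemma sum_cube_mul_seqT_div (m : ℕ) :
    ∑ n ∈ range (2 * m + 1), (n : ℚ) ^ 3 * seqT n / 4 ^ n =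
      -(2 * m + 1) / 8 * fracSum (perturbedCoeff m) m 4 1
        + 3 * (2 * m + 1) / 8 * fracSum (perturbedCoeff m) m 4 3
        + (2 * m + 1) ^ 2 / 2 * fracSum (perturbedCoeff m) m 2 1
        - 3 * (2 * m + 1) ^ 3 / 2 * fracSum (perturbedCoeff m) m 4 3
        + ((2 * m + 1) ^ 4 - (2 * m + 1) ^ 2) / 2 * fracSum (perturbedCoeff m) m 2 2 := by
  have hfg (k n : ℕ) : (n : ℚ) ^ 3 =
      (n + 2 * k + 1) * (-1 / 8 / (4 * k + 1) + 3 / 8 / (4 * k + 3)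
          + ((n + 1 : ℕ) : ℚ) / 2 / (2 * k + 1) - 3 / 2 * ((n + 1 : ℕ) : ℚ) ^ 2 / (4 * k + 3)
          + (((n + 1 : ℕ) : ℚ) ^ 3 - ((n + 1 : ℕ) : ℚ)) / 2 / (2 * k + 2))
        - (n - 2 * k) * (-1 / 8 / (4 * k + 1) + 3 / 8 / (4 * k + 3)
          + (n : ℚ) / 2 / (2 * k + 1) - 3 / 2 * (n : ℚ) ^ 2 / (4 * k + 3)
          + ((n : ℚ) ^ 3 - n) / 2 / (2 * k + 2)) := by
    push_cast
    field_simp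
    ring
  rw [sum_mul_seqT_div (g := fun k n => -1 / 8 / (4 * k + 1) + 3 / 8 / (4 * k + 3)
    + (n : ℚ) / 2 / (2 * k + 1) - 3 / 2 * (n : ℚ) ^ 2 / (4 * k + 3)
    + ((n : ℚ) ^ 3 - n) / 2 / (2 * k + 2)) hfg]
  simp only [fracSum, mul_sum, ← sum_sub_distrib, ← sum_add_distrib]
  refine sum_congr rfl fun k _ => ?_
  push_cast
  ring

section Padic

variable {p : ℕ} [hp : Fact p.Prime] {r s : ℕ} {a b u : ℚ}

/-- The rationals divisible by `p ^ r`, i.e. those in `p ^ r ℤ₍ₚ₎`. Membership of `a - b` is the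
congruence of `a` and `b` modulo `p ^ r`. -/
def padicIdeal (p r : ℕ) [Fact p.Prime] : AddSubgroup ℚ where
  carrier := {a | padicNorm p a ≤ (p : ℚ) ^ (-r : ℤ)}
  zero_mem' := by
    simp only [Set.mem_ofPred_eq, padicNorm.zero]
    positivity
  add_mem' ha hb := padicNorm.nonarchimedean.trans (max_le ha hb)
  neg_mem' ha := by simpa using ha

lemma mem_padicIdeal : a ∈ padicIdeal p r ↔ padicNorm p a ≤ (p : ℚ) ^ (-r : ℤ) := Iff.rfl

lemma intCast_mem_padicIdeal {z : ℤ} : (z : ℚ) ∈ padicIdeal p r ↔ (p : ℤ) ^ r ∣ z := by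
  rw [mem_padicIdeal, ← padicNorm.dvd_iff_norm_le]
  push_cast
  rfl

lemma natCast_mem_padicIdeal (n : ℕ) : (n : ℚ) ∈ padicIdeal p 0 := by
  simpa using intCast_mem_padicIdeal (p := p) (r := 0) (z := n)

lemma prime_pow_mem_padicIdeal (r : ℕ) : (p : ℚ) ^ r ∈ padicIdeal p r := by
  simpa using intCast_mem_padicIdeal (p := p) (r := r) (z := (p : ℤ) ^ r)

lemma padicIdeal_antitone (h : r ≤ s) : padicIdeal p s ≤ padicIdeal p r := fun _ ha =>
  (mem_padicIdeal.1 ha).trans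
    (zpow_le_zpow_right₀ (mod_cast hp.out.one_le) (by omega))

lemma mul_mem_padicIdeal (ha : a ∈ padicIdeal p r) (hb : b ∈ padicIdeal p s) :
    a * b ∈ padicIdeal p (r + s) := by
  have hp0 : (p : ℚ) ≠ 0 := mod_cast hp.out.ne_zero
  rw [mem_padicIdeal, padicNorm.mul, Nat.cast_add, neg_add, zpow_add₀ hp0]
  exact mul_le_mul ha hb (padicNorm.nonneg b) (by positivity)

lemma integral_mul_mem_padicIdeal (ha : a ∈ padicIdeal p 0) (hb : b ∈ padicIdeal p r) :
    a * b ∈ padicIdeal p r := by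
  simpa using mul_mem_padicIdeal ha hb

lemma natCast_mul_mem_padicIdeal (n : ℕ) (ha : a ∈ padicIdeal p r) :
    n * a ∈ padicIdeal p r :=
  integral_mul_mem_padicIdeal (natCast_mem_padicIdeal n) ha

lemma div_mem_padicIdeal_iff (hu : padicNorm p u = 1) :
    a / u ∈ padicIdeal p r ↔ a ∈ padicIdeal p r := by
  rw [mem_padicIdeal, padicNorm.div, hu, div_one, mem_padicIdeal]

lemma mul_mem_padicIdeal_iff (hu : padicNorm p u = 1) :
    a * u ∈ padicIdeal p r ↔ a ∈ padicIdeal p r := by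
  rw [mem_padicIdeal, padicNorm.mul, hu, mul_one, mem_padicIdeal]

lemma prime_mul_mem_padicIdeal_iff : p * a ∈ padicIdeal p (r + 1) ↔ a ∈ padicIdeal p r := by
  have hp0 : (0 : ℚ) < p := mod_cast hp.out.pos
  rw [mem_padicIdeal, padicNorm.mul, padicNorm.padicNorm_p_of_prime, Nat.cast_succ, neg_add,
    zpow_add₀ hp0.ne', zpow_neg_one, mul_comm, mul_le_mul_iff_left₀ (inv_pos.2 hp0), mem_padicIdeal]

lemma padicNorm_natCast_eq_one {d : ℕ} (hd : ¬p ∣ d) : padicNorm p d = 1 :=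
  (padicNorm.nat_eq_one_iff d).2 hd

lemma padicNorm_two (hp2 : p ≠ 2) : padicNorm p 2 = 1 := by
  refine padicNorm_natCast_eq_one (d := 2) fun h => hp2 ?_
  exact (Nat.prime_dvd_prime_iff_eq hp.out Nat.prime_two).1 h

lemma padicNorm_eq_one_of_sub_mem (hu : padicNorm p u = 1) (h : a - u ∈ padicIdeal p 1) :
    padicNorm p a = 1 := by
  have hlt : padicNorm p (a - u) < padicNorm p u := by
    refine hu ▸ (mem_padicIdeal.1 h).trans_lt ?_
    simpa using inv_lt_one_of_one_lt₀ (mod_cast hp.out.one_lt : (1 : ℚ) < p)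
  rw [← sub_add_cancel a u, padicNorm.add_eq_max_of_ne hlt.ne, max_eq_right hlt.le, hu]

lemma intCast_mem_padicIdeal_of_zmod {z : ℤ} (hz : (z : ZMod (p ^ r)) = 0) :
    (z : ℚ) ∈ padicIdeal p r := by
  rw [ZMod.intCast_zmod_eq_zero_iff_dvd, Nat.cast_pow] at hz
  exact intCast_mem_padicIdeal.2 hz

lemma ratCongr_of_sub_mem (h : a - b ∈ padicIdeal p r) : ratCongr p r a b := by
  rw [ratCongr, ← intCast_mem_padicIdeal, ← Rat.mul_den_eq_num, mul_comm]
  exact natCast_mul_mem_padicIdeal _ h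

end Padic

lemma not_dvd_of_lt_three_mul {p d : ℕ} (h₀ : 0 < d) (h₃ : d < 3 * p) (h₁ : d ≠ p)
    (h₂ : d ≠ 2 * p) : ¬p ∣ d := by
  rintro ⟨c, rfl⟩
  have hc : c < 3 := by
    by_contra! hc
    exact absurd h₃ (by nlinarith)
  interval_cases c <;> omega

section Reduction

variable {p m r : ℕ} [hp : Fact p.Prime]

lemma legendreCoeff_mem_padicIdeal (m k : ℕ) : legendreCoeff m k ∈ padicIdeal p 0 := by
  have h := intCast_mem_padicIdeal (p := p) (r := 0)
    (z := (-1) ^ k * m.choose k * (m + k).choose k)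
  push_cast at h
  exact h.2 (by simp)

lemma perturbedCoeff_sub_legendreCoeff_mem (hpm : p = 2 * m + 1) {k : ℕ} (hk : k ≤ m) :
    perturbedCoeff m k - legendreCoeff m k ∈ padicIdeal p 2 := by
  have hprod : ∏ i ∈ range k, (1 - (2 * m + 1) ^ 2 / (4 * ((i : ℚ) + 1) ^ 2)) - 1 ∈
      padicIdeal p 2 := by
    induction k with
    | zero => simp
    | succ k ih =>
      specialize ih (by omega)
      have hunit : padicNorm p (2 * (k + 1) : ℕ) = 1 :=
        padicNorm_natCast_eq_one (Nat.not_dvd_of_pos_of_lt (by omega) (by omega))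
      have hterm : (1 : ℚ) - (p : ℚ) ^ 2 / (2 * (k + 1) : ℕ) / (2 * (k + 1) : ℕ) - 1 ∈
          padicIdeal p 2 := by
        rw [sub_right_comm, sub_self, zero_sub, neg_mem_iff, div_mem_padicIdeal_iff hunit,
          div_mem_padicIdeal_iff hunit]
        exact prime_pow_mem_padicIdeal 2
      have hint := add_mem (padicIdeal_antitone (Nat.zero_le 2) ih) (natCast_mem_padicIdeal 1)
      convert add_mem (integral_mul_mem_padicIdeal hint hterm) ih using 1
      rw [prod_range_succ, hpm]
      push_cast
      field_simp
      ring
  convert integral_mul_mem_padicIdeal (legendreCoeff_mem_padicIdeal m k) hprod using 1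
  rw [perturbedCoeff]
  ring

lemma fracSum_perturbedCoeff_sub_mem_two (hpm : p = 2 * m + 1) {a b : ℕ}
    (hd : ∀ k ≤ m, ¬p ∣ a * k + b) :
    fracSum (perturbedCoeff m) m a b - fracSum (legendreCoeff m) m a b ∈ padicIdeal p 2 := by
  rw [fracSum, fracSum, ← sum_sub_distrib]
  refine sum_mem fun k hk => ?_
  have hk' : k ≤ m := Nat.lt_succ_iff.1 (mem_range.1 hk)
  have hunit := padicNorm_natCast_eq_one (hd k hk')
  push_cast at hunit
  rw [← sub_div, div_mem_padicIdeal_iff hunit]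
  exact perturbedCoeff_sub_legendreCoeff_mem hpm hk'

lemma fracSum_perturbedCoeff_sub_mem_one (hpm : p = 2 * m + 1) {a b : ℕ}
    (hd : ∀ k ≤ m, p ∣ a * k + b → a * k + b = p) :
    fracSum (perturbedCoeff m) m a b - fracSum (legendreCoeff m) m a b ∈ padicIdeal p 1 := by
  rw [fracSum, fracSum, ← sum_sub_distrib]
  refine sum_mem fun k hk => ?_
  have hk' : k ≤ m := Nat.lt_succ_iff.1 (mem_range.1 hk)
  have hsub := perturbedCoeff_sub_legendreCoeff_mem hpm hk'
  rw [← sub_div]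
  by_cases hdvd : p ∣ a * k + b
  · have hp0 : (p : ℚ) ≠ 0 := mod_cast hp.out.ne_zero
    rw [show (a : ℚ) * k + b = p by exact_mod_cast hd k hk' hdvd, ← prime_mul_mem_padicIdeal_iff,
      mul_div_cancel₀ _ hp0]
    exact hsub
  · have hunit := padicNorm_natCast_eq_one hdvd
    push_cast at hunit
    rw [div_mem_padicIdeal_iff hunit]
    exact padicIdeal_antitone one_le_two hsub

lemma sq_mul_fracSum_two_one_sub_mem (hpm : p = 2 * m + 1) :
    (p : ℚ) ^ 2 * fracSum (perturbedCoeff m) m 2 1 - p ∈ padicIdeal p 3 := by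
  have hd (k : ℕ) (hk : k ≤ m) (hdvd : p ∣ 2 * k + 1) : 2 * k + 1 = p := by
    by_contra hne
    exact not_dvd_of_lt_three_mul (by omega) (by omega) hne (by omega) hdvd
  have h := mul_mem_padicIdeal (prime_pow_mem_padicIdeal 2)
    (fracSum_perturbedCoeff_sub_mem_one hpm hd)
  have hp0 : (p : ℚ) ≠ 0 := mod_cast hp.out.ne_zero
  convert h using 1
  rw [Nat.cast_ofNat, Nat.cast_one, fracSum_legendreCoeff_two_one,
    show (2 * m + 1 : ℚ) = p by exact_mod_cast hpm.symm]
  field_simp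

lemma fracSum_perturbedCoeff_two_two_mem (hpm : p = 2 * m + 1) :
    fracSum (perturbedCoeff m) m 2 2 ∈ padicIdeal p 2 := by
  have hm : 0 < m := by
    have := hp.out.two_le
    omega
  have hd (k : ℕ) (hk : k ≤ m) : ¬p ∣ 2 * k + 2 :=
    not_dvd_of_lt_three_mul (by omega) (by omega) (by omega) (by omega)
  simpa [fracSum_legendreCoeff_two_two hm] using fracSum_perturbedCoeff_sub_mem_two hpm hd

lemma sum_sq_mul_seqT_div_sub_mem (hpm : p = 2 * m + 1) (hr : r ≤ 3)
    (h₃ : (p : ℚ) ^ 3 * fracSum (perturbedCoeff m) m 4 3 ∈ padicIdeal p r) :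
    ∑ n ∈ range p, (n : ℚ) ^ 2 * seqT n / 4 ^ n -
      (p * fracSum (perturbedCoeff m) m 4 1 / 4 - p * fracSum (perturbedCoeff m) m 4 3 / 4 - p / 2)
        ∈ padicIdeal p r := by
  have h₂ : padicNorm p 2 = 1 := padicNorm_two (by omega)
  have hp' : (p : ℚ) = 2 * m + 1 := mod_cast hpm
  have h := sub_mem h₃ ((div_mem_padicIdeal_iff h₂).2
    (padicIdeal_antitone hr (sq_mul_fracSum_two_one_sub_mem hpm)))
  convert h using 1
  rw [hpm, sum_sq_mul_seqT_div, ← hpm, hp']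
  ring

lemma sum_cube_mul_seqT_div_sub_mem (hpm : p = 2 * m + 1) (hr : r ≤ 3)
    (h₃ : (p : ℚ) ^ 3 * fracSum (perturbedCoeff m) m 4 3 ∈ padicIdeal p r) :
    ∑ n ∈ range p, (n : ℚ) ^ 3 * seqT n / 4 ^ n -
      (-(p * fracSum (perturbedCoeff m) m 4 1) / 8
        + 3 * (p * fracSum (perturbedCoeff m) m 4 3) / 8 + p / 2) ∈ padicIdeal p r := by
  have h₂ : padicNorm p 2 = 1 := padicNorm_two (by omega)
  have hp' : (p : ℚ) = 2 * m + 1 := mod_cast hpm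
  have h₄ : (p : ℚ) ^ 2 * fracSum (perturbedCoeff m) m 2 2 ∈ padicIdeal p r :=
    padicIdeal_antitone (by omega)
      (mul_mem_padicIdeal (prime_pow_mem_padicIdeal 2) (fracSum_perturbedCoeff_two_two_mem hpm))
  have h := add_mem (sub_mem ((div_mem_padicIdeal_iff h₂).2
      (padicIdeal_antitone hr (sq_mul_fracSum_two_one_sub_mem hpm)))
      ((div_mem_padicIdeal_iff h₂).2 (natCast_mul_mem_padicIdeal 3 h₃)))
    ((div_mem_padicIdeal_iff h₂).2 (sub_mem (natCast_mul_mem_padicIdeal (p ^ 2) h₄) h₄))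
  convert h using 1
  rw [hpm, sum_cube_mul_seqT_div, ← hpm]
  push_cast
  rw [hp']
  ring

end Reduction

section Products

variable {R : Type*} [CommRing R]

lemma prod_centered_odd_progression (e f : R) (k : ℕ) :
    ∏ j ∈ range (2 * k + 1), (e + (j - k) * f) =
      e * ∏ i ∈ range k, (e ^ 2 - ((i + 1) * f) ^ 2) := by
  induction k with
  | zero => simp
  | succ k ih =>
    rw [prod_range_succ _ k, ← mul_assoc, ← ih, show 2 * (k + 1) + 1 = 2 * k + 1 + 1 + 1 by ring,
      prod_range_succ, prod_range_succ']
    have hshift : ∏ j ∈ range (2 * k + 1), (e + ((j + 1 : ℕ) - (k + 1 : ℕ)) * f) =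
        ∏ j ∈ range (2 * k + 1), (e + (j - k) * f) :=
      prod_congr rfl fun j _ => by push_cast; ring
    rw [hshift]
    push_cast
    ring

lemma prod_centered_even_progression (e f : R) (k : ℕ) :
    ∏ j ∈ range (2 * k), (e + (2 * j + 1 - 2 * k) * f) =
      ∏ i ∈ range k, (e ^ 2 - ((2 * i + 1) * f) ^ 2) := by
  induction k with
  | zero => simp
  | succ k ih =>
    rw [prod_range_succ _ k, ← ih, show 2 * (k + 1) = 2 * k + 1 + 1 by ring,
      prod_range_succ, prod_range_succ']
    have hshift : ∏ j ∈ range (2 * k), (e + (2 * (j + 1 : ℕ) + 1 - 2 * (k + 1 : ℕ)) * f) =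
        ∏ j ∈ range (2 * k), (e + (2 * j + 1 - 2 * k) * f) :=
      prod_congr rfl fun j _ => by push_cast; ring
    rw [hshift]
    push_cast
    ring

/-- `∏ i < k, (P² - (4i+2)²)`, in terms of which both fractional sums at `p = P` are evaluated. -/
def oddProd (k : ℕ) (P : R) : R := ∏ i ∈ range k, (P ^ 2 - (4 * i + 2) ^ 2)

/-- `∏ i < k, (P² - (4i+4)²)`, the counterpart of `oddProd`. -/
def evenProd (k : ℕ) (P : R) : R := ∏ i ∈ range k, (P ^ 2 - (4 * i + 4) ^ 2)

@[simp, norm_cast]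
lemma intCast_oddProd (k : ℕ) (P : ℤ) : ((oddProd k P : ℤ) : R) = oddProd k (P : R) := by
  simp [oddProd]

@[simp, norm_cast]
lemma intCast_evenProd (k : ℕ) (P : ℤ) : ((evenProd k P : ℤ) : R) = evenProd k (P : R) := by
  simp [evenProd]

lemma prod_four_mul_add_evenProd (k : ℕ) (P : R) :
    ∏ j ∈ range (2 * k + 1), (4 * (j : R) + (P - 4 * k)) = P * evenProd k P := by
  rw [evenProd, prod_congr rfl fun (i : ℕ) _ => show P ^ 2 - (4 * (i : R) + 4) ^ 2 =
    P ^ 2 - ((i + 1) * 4) ^ 2 by ring, ← prod_centered_odd_progression]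
  exact prod_congr rfl fun j _ => by ring

lemma prod_four_mul_add_oddProd (k : ℕ) (P : R) :
    ∏ j ∈ range (2 * k), (4 * (j : R) + (P + 2 - 4 * k)) = oddProd k P := by
  rw [oddProd, prod_congr rfl fun (i : ℕ) _ => show P ^ 2 - (4 * (i : R) + 2) ^ 2 =
    P ^ 2 - ((2 * i + 1) * 2) ^ 2 by ring, ← prod_centered_even_progression]
  exact prod_congr rfl fun j _ => by ring

lemma oddProd_of_sq_eq_zero (k : ℕ) {P : R} (hP : P ^ 2 = 0) :
    oddProd k P = (-4) ^ k * (∏ i ∈ range k, (2 * (i : R) + 1)) ^ 2 := by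
  rw [oddProd, ← prod_pow, ← card_range k, ← prod_const, card_range, ← prod_mul_distrib]
  exact prod_congr rfl fun i _ => by rw [hP]; ring

lemma evenProd_of_sq_eq_zero (k : ℕ) {P : R} (hP : P ^ 2 = 0) :
    evenProd k P = (-16) ^ k * (k ! : R) ^ 2 := by
  rw [evenProd, ← prod_range_add_one_eq_factorial, Nat.cast_prod, ← prod_pow, ← card_range k,
    ← prod_const, card_range, ← prod_mul_distrib]
  exact prod_congr rfl fun i _ => by rw [hP]; push_cast; ring

end Products

lemma padicNorm_evenProd_eq_one {p k : ℕ} [hp : Fact p.Prime] (hp2 : p ≠ 2) (hk : k < p) :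
    padicNorm p (evenProd k (p : ℚ)) = 1 := by
  have hprime := Nat.prime_iff_prime_int.1 hp.out
  suffices h : ¬(p : ℤ) ∣ evenProd k (p : ℤ) by
    simpa using (padicNorm.int_eq_one_iff _).2 h
  intro h
  obtain ⟨i, hi, hdvd⟩ := hprime.exists_mem_finset_dvd h
  have hfour : (p : ℤ) ∣ ((4 * (i + 1) : ℕ) : ℤ) := by
    refine hprime.dvd_of_dvd_pow (n := 2) ?_
    convert dvd_sub (dvd_pow_self (p : ℤ) two_ne_zero) hdvd using 1
    push_cast
    ring
  rcases hp.out.dvd_mul.1 (Int.natCast_dvd_natCast.1 hfour) with h₄ | hi'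
  · exact hp2 ((Nat.prime_dvd_prime_iff_eq hp.out Nat.prime_two).1
      (hp.out.dvd_of_dvd_pow (m := 2) (n := 2) h₄))
  · exact Nat.not_dvd_of_pos_of_lt i.succ_pos (lt_of_le_of_lt (mem_range.1 hi) hk) hi'

section ThreeModFour

lemma choose_mul_factorial_succ (k : ℕ) :
    (2 * k + 1).choose k * (k + 1)! = 2 ^ k * ∏ i ∈ range (k + 1), (2 * i + 1) := by
  have hodd : (2 * k + 1)‼ = ∏ i ∈ range (k + 1), (2 * i + 1) := by
    rw [Nat.doubleFactorial_eq_prod_odd, prod_range_succ']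
    simp
  have h := Nat.choose_mul_factorial_mul_factorial (show k ≤ 2 * k + 1 by omega)
  rw [show 2 * k + 1 - k = k + 1 by omega, Nat.factorial_eq_mul_doubleFactorial (2 * k),
    Nat.doubleFactorial_two_mul, hodd] at h
  refine Nat.eq_of_mul_eq_mul_right k.factorial_pos ?_
  linarith

lemma fracSum_legendreCoeff_four_three (k : ℕ) {P : ℚ} (hP : P = 4 * k + 3) :
    P * fracSum (legendreCoeff (2 * k + 1)) (2 * k + 1) 4 3 * ((2 * P + 1) * evenProd k P) =
      oddProd k P := by
  rw [fracSum_legendreCoeff _ fun j => by positivity, prod_range_succ',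
    prod_range_succ _ (2 * k + 1),
    ← prod_four_mul_add_oddProd]
  have hden : ∏ j ∈ range (2 * k + 1), (4 * (j : ℚ) + 3) = P * evenProd k P := by
    rw [← prod_four_mul_add_evenProd]
    exact prod_congr rfl fun j _ => by rw [hP]; ring
  have hnum : ∏ j ∈ range (2 * k), (4 * (((j + 1 : ℕ) : ℚ) + 1) - 3) =
      ∏ j ∈ range (2 * k), (4 * (j : ℚ) + (P + 2 - 4 * k)) :=
    prod_congr rfl fun j _ => by rw [hP]; push_cast; ring
  have hne : P * evenProd k P ≠ 0 := by
    rw [← hden]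
    exact prod_ne_zero_iff.2 fun j _ => by positivity
  have hlast : 4 * ((2 * k + 1 : ℕ) : ℚ) + 3 = 2 * P + 1 := by
    rw [hP]
    push_cast
    ring
  have hne' : 2 * P + 1 ≠ 0 := by
    rw [hP]
    positivity
  rw [hnum, hden, hlast, mul_div_assoc', div_mul_eq_mul_div, div_eq_iff (mul_ne_zero hne hne')]
  push_cast
  ring

lemma oddProd_eq_of_sq_eq_zero {R : Type*} [CommRing R] {k : ℕ} {P : R} (hP : P = 4 * k + 3)
    (hP2 : P ^ 2 = 0) (hy : P * (4 * 16 ^ k - 1) = 0) (hy2 : (4 * 16 ^ k - 1 : R) ^ 2 = 0) :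
    (oddProd k P - (2 * P + 1) * evenProd k P *
      ((2 * P + 2 - 4 * 16 ^ k) * ((2 * k + 1).choose k : R) ^ 2)) *
        (4 * (k + 1)! : R) ^ 2 = 0 := by
  have hchoose : ((2 * k + 1).choose k : R) * (k + 1)! =
      2 ^ k * ((∏ i ∈ range k, (2 * (i : R) + 1)) * (2 * k + 1)) := by
    have h := congrArg (Nat.cast : ℕ → R) (choose_mul_factorial_succ k)
    push_cast at h
    rw [h, prod_range_succ]
  have hfact : ((k + 1)! : R) = (k + 1) * k ! := by
    rw [Nat.factorial_succ]
    push_cast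
    ring
  rw [oddProd_of_sq_eq_zero k hP2, evenProd_of_sq_eq_zero k hP2]
  set O := ∏ i ∈ range k, (2 * (i : R) + 1)
  set y : R := 4 * 16 ^ k - 1 with hydef
  have h4 : (4 : R) ^ k = 2 ^ k * 2 ^ k := by rw [← mul_pow]; norm_num
  have h16 : (4 : R) * 16 ^ k = 1 + y := by rw [hydef]; ring
  rw [neg_pow, neg_pow (16 : R)]
  have hcoeff : (P + 1) ^ 2 - (2 * P + 1) * (1 + y) * (2 * P + 1 - y) * (P - 1) ^ 2 = 0 := by
    linear_combination (4 + 4 * P - 4 * P ^ 2) * hP2 - (2 * P + 1) * (P - 1) ^ 2 * (2 * hy - hy2)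
  calc _ = (-1) ^ k * (k ! : R) ^ 2 * ((4 * (k + 1)) ^ 2 * 4 ^ k * O ^ 2 - (2 * P + 1) *
        (4 * 16 ^ k) * (2 * P + 2 - 4 * 16 ^ k) * 4 *
        (((2 * k + 1).choose k : R) * (k + 1)!) ^ 2) := by rw [hfact]; ring
    _ = (-1) ^ k * (k ! : R) ^ 2 * (2 ^ k * O) ^ 2 * ((P + 1) ^ 2 - (2 * P + 1) * (1 + y) *
        (2 * P + 1 - y) * (P - 1) ^ 2) := by
        rw [hchoose, h16, h4, hP]
        ring
    _ = 0 := by rw [hcoeff, mul_zero]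

lemma R1_eq_intCast {p k : ℕ} (hpk : p = 4 * k + 3) :
    R1 p = ((2 * (p : ℤ) + 2 - 4 * 16 ^ k) * ((2 * k + 1).choose k : ℤ) ^ 2 : ℤ) := by
  rw [R1, show (p - 1) / 2 = 2 * k + 1 by omega, show p / 4 = k by omega,
    show p - 1 = 2 + 4 * k by omega, pow_add, pow_mul]
  norm_num

variable {p k : ℕ} [hp : Fact p.Prime]

lemma prime_dvd_four_mul_sixteen_pow_sub_one (hpk : p = 4 * k + 3) :
    (p : ℤ) ∣ 4 * 16 ^ k - 1 := by
  have hcop : IsCoprime (2 : ℤ) p :=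
    Nat.isCoprime_iff_coprime.2 ((Nat.coprime_primes Nat.prime_two hp.out).2 (by omega))
  have h := (Int.ModEq.pow_card_sub_one_eq_one hp.out hcop).symm.dvd
  rwa [show p - 1 = 2 + 4 * k by omega, pow_add, pow_mul] at h

lemma prime_mul_fracSum_legendreCoeff_four_three_sub_mem (hpk : p = 4 * k + 3) :
    p * fracSum (legendreCoeff (2 * k + 1)) (2 * k + 1) 4 3 - R1 p ∈ padicIdeal p 2 := by
  have hodd : p ≠ 2 := by omega
  have hunit₁ : padicNorm p (2 * p + 1) = 1 := by
    refine mod_cast padicNorm_natCast_eq_one (d := 2 * p + 1) fun h => hp.out.one_lt.ne' ?_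
    exact Nat.dvd_one.1 ((Nat.dvd_add_right (dvd_mul_left p 2)).1 h)
  have hunit₂ : padicNorm p (evenProd k (p : ℚ)) = 1 := padicNorm_evenProd_eq_one hodd (by omega)
  have hunit₃ : padicNorm p (4 * (k + 1)! : ℕ) = 1 := by
    refine padicNorm_natCast_eq_one fun h => ?_
    rcases hp.out.dvd_mul.1 h with h | h
    · exact hodd ((Nat.prime_dvd_prime_iff_eq hp.out Nat.prime_two).1
        (hp.out.dvd_of_dvd_pow (m := 2) (n := 2) h))
    · have := hp.out.dvd_factorial.1 h
      omega
  have hfermat := prime_dvd_four_mul_sixteen_pow_sub_one hpk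
  have hzmod (z : ℤ) (hz : (p : ℤ) ^ 2 ∣ z) : (z : ZMod (p ^ 2)) = 0 :=
    (ZMod.intCast_zmod_eq_zero_iff_dvd _ _).2 (by simpa using hz)
  have hzero := oddProd_eq_of_sq_eq_zero (R := ZMod (p ^ 2)) (k := k) (P := p)
    (by exact_mod_cast congrArg (Nat.cast : ℕ → ZMod (p ^ 2)) hpk)
    (by simpa using hzmod (p ^ 2) dvd_rfl)
    (by simpa using hzmod (p * (4 * 16 ^ k - 1)) (by rw [sq]; exact mul_dvd_mul_left _ hfermat))
    (by simpa using hzmod ((4 * 16 ^ k - 1) ^ 2) (pow_dvd_pow_of_dvd hfermat 2))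
  have hmem := intCast_mem_padicIdeal_of_zmod (p := p) (r := 2)
    (z := (oddProd k (p : ℤ) - (2 * p + 1) * evenProd k (p : ℤ) *
      ((2 * p + 2 - 4 * 16 ^ k) * ((2 * k + 1).choose k : ℤ) ^ 2)) * (4 * (k + 1)! : ℤ) ^ 2)
    (by rw [← hzero]; push_cast; rfl)
  rw [← mul_mem_padicIdeal_iff hunit₁, ← mul_mem_padicIdeal_iff hunit₂,
    ← mul_mem_padicIdeal_iff hunit₃, ← mul_mem_padicIdeal_iff hunit₃]
  have hfrac := fracSum_legendreCoeff_four_three k (P := p) (by exact_mod_cast hpk)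
  convert hmem using 1
  rw [R1_eq_intCast hpk]
  push_cast
  rw [← hfrac]
  ring

lemma prime_mul_fracSum_four_three_sub_mem (hpk : p = 4 * k + 3) :
    p * fracSum (perturbedCoeff (2 * k + 1)) (2 * k + 1) 4 3 - R1 p ∈ padicIdeal p 2 := by
  have hd (j : ℕ) (hj : j ≤ 2 * k + 1) (hdvd : p ∣ 4 * j + 3) : 4 * j + 3 = p := by
    by_contra hne
    exact not_dvd_of_lt_three_mul (by omega) (by omega) hne (by omega) hdvd
  have h := fracSum_perturbedCoeff_sub_mem_one (m := 2 * k + 1) (by omega) hd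
  rw [← prime_mul_mem_padicIdeal_iff] at h
  convert add_mem h (prime_mul_fracSum_legendreCoeff_four_three_sub_mem hpk) using 1
  push_cast
  ring

lemma fracSum_four_one_mem (hpk : p = 4 * k + 3) :
    fracSum (perturbedCoeff (2 * k + 1)) (2 * k + 1) 4 1 ∈ padicIdeal p 1 := by
  have hd (j : ℕ) (hj : j ≤ 2 * k + 1) : ¬p ∣ 4 * j + 1 :=
    not_dvd_of_lt_three_mul (by omega) (by omega) (by omega) (by omega)
  have hX := fracSum_perturbedCoeff_sub_mem_two (m := 2 * k + 1) (by omega) hd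
  suffices hY : fracSum (legendreCoeff (2 * k + 1)) (2 * k + 1) 4 1 ∈ padicIdeal p 1 by
    convert add_mem (padicIdeal_antitone one_le_two hX) hY using 1
    push_cast
    ring
  have hunit : padicNorm p (∏ j ∈ range (2 * k + 1 + 1), (4 * j + 1) : ℕ) = 1 := by
    refine padicNorm_natCast_eq_one fun h => ?_
    obtain ⟨j, hj, hdvd⟩ := hp.out.prime.exists_mem_finset_dvd h
    exact hd j (Nat.lt_succ_iff.1 (mem_range.1 hj)) hdvd
  have hdvd : (p : ℤ) ^ 1 ∣ ∏ j ∈ range (2 * k + 1), (4 * (j + 1) - 1) := by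
    rw [pow_one]
    refine dvd_trans ?_ (dvd_prod_of_mem _ (mem_range.2 (by omega : k < 2 * k + 1)))
    rw [hpk]
    exact dvd_of_eq (by push_cast; ring)
  rw [fracSum_legendreCoeff _ fun j => by positivity]
  have h := (div_mem_padicIdeal_iff hunit).2 (intCast_mem_padicIdeal.2 hdvd)
  push_cast at h
  exact h

theorem sum_seqT_three_mod_four (hpk : p = 4 * k + 3) :
    ∑ n ∈ range p, (n : ℚ) ^ 2 * seqT n / 4 ^ n - (-(1 / 4) * R1 p - p / 2) ∈ padicIdeal p 2 ∧
    ∑ n ∈ range p, (n : ℚ) ^ 3 * seqT n / 4 ^ n - (3 / 8 * R1 p + p / 2) ∈ padicIdeal p 2 := by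
  have hpm : p = 2 * (2 * k + 1) + 1 := by omega
  have h₂ : padicNorm p 2 = 1 := padicNorm_two (by omega)
  have h₁ := prime_mul_mem_padicIdeal_iff.2 (fracSum_four_one_mem hpk)
  have h₃ := prime_mul_fracSum_four_three_sub_mem hpk
  have hR : R1 p ∈ padicIdeal p 0 := by
    rw [R1_eq_intCast hpk, intCast_mem_padicIdeal]
    simp
  have hX₃ : p * fracSum (perturbedCoeff (2 * k + 1)) (2 * k + 1) 4 3 ∈ padicIdeal p 0 := by
    simpa using add_mem (padicIdeal_antitone (Nat.zero_le 2) h₃) hR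
  have hcube : (p : ℚ) ^ 3 * fracSum (perturbedCoeff (2 * k + 1)) (2 * k + 1) 4 3 ∈
      padicIdeal p 2 := by
    convert mul_mem_padicIdeal (prime_pow_mem_padicIdeal 2) hX₃ using 1
    ring
  have hdiv₄ {a : ℚ} (ha : a ∈ padicIdeal p 2) : a / 2 / 2 ∈ padicIdeal p 2 := by
    rwa [div_mem_padicIdeal_iff h₂, div_mem_padicIdeal_iff h₂]
  constructor
  · convert add_mem (sum_sq_mul_seqT_div_sub_mem hpm (by omega) hcube)
      (sub_mem (hdiv₄ h₁) (hdiv₄ h₃)) using 1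
    ring
  · have hdiv₈ := (div_mem_padicIdeal_iff h₂).2
      (hdiv₄ (sub_mem (natCast_mul_mem_padicIdeal 3 h₃) h₁))
    convert add_mem (sum_cube_mul_seqT_div_sub_mem hpm (by omega) hcube) hdiv₈ using 1
    push_cast
    ring

end ThreeModFour

section TruncExp

variable {R : Type*} [CommRing R] {q a b c d : R}

/-- The exponential of `2 q a`, truncated to be a homomorphism in `a` when `q ^ 3 = 0`. The factor
`2` avoids a denominator. -/
def truncExp (q a : R) : R := 1 + 2 * (q * a) + 2 * (q * a) ^ 2

lemma truncExp_zero : truncExp q 0 = 1 := by simp [truncExp]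

lemma truncExp_congr (h : q * a = q * b) : truncExp q a = truncExp q b := by
  rw [truncExp, h, truncExp]

lemma truncExp_add (hq : q ^ 3 = 0) (a b : R) :
    truncExp q (a + b) = truncExp q a * truncExp q b := by
  simp only [truncExp]
  linear_combination (-4 * a * b * (a + b) - 4 * q * a ^ 2 * b ^ 2) * hq

lemma truncExp_mul_truncExp_neg (hq : q ^ 3 = 0) (a : R) :
    truncExp q a * truncExp q (-a) = 1 := by
  rw [← truncExp_add hq, add_neg_cancel, truncExp_zero]

lemma isUnit_truncExp (hq : q ^ 3 = 0) (a : R) : IsUnit (truncExp q a) :=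
  .of_mul_eq_one _ (truncExp_mul_truncExp_neg hq a)

lemma eq_mul_truncExp_sub (hq : q ^ 3 = 0) (h : c * truncExp q a = d * truncExp q b) :
    c = d * truncExp q (b - a) := by
  apply (isUnit_truncExp hq a).mul_right_cancel
  rw [h, mul_assoc, ← truncExp_add hq, sub_add_cancel]

lemma mul_eq_mul_of_truncExp_eq (hq : q ^ 3 = 0) (h₂ : IsUnit (2 : R))
    (h : truncExp q a = truncExp q b) : q * a = q * b := by
  have hprod : (q * a - q * b) * (1 + q * (a + b)) = 0 := by
    apply h₂.mul_left_cancel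
    simp only [truncExp] at h
    linear_combination h
  linear_combination (1 - q * (a + b) + q ^ 2 * (a + b) ^ 2) * hprod -
    (a - b) * (a + b) ^ 3 * q * hq

lemma isUnit_mul_sub (hq : q ^ 3 = 0) (ha : IsUnit a) (b : R) : IsUnit (b * q - a) := by
  have hnil : IsNilpotent (b * q) := ⟨3, by rw [mul_pow, hq, mul_zero]⟩
  simpa [sub_eq_add_neg] using hnil.isUnit_add_right_of_commute ha.neg (Commute.all _ _)

end TruncExp

section RisingProd

variable {R : Type*} [CommRing R]

/-- The rising product `(s + 1) (s + 2) ⋯ (s + n)`. -/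
def risingProd (n : ℕ) (s : R) : R := ∏ i ∈ range n, (s + (i + 1))

lemma risingProd_succ (n : ℕ) (s : R) :
    risingProd (n + 1) s = risingProd n s * (s + (n + 1)) := prod_range_succ _ _

lemma risingProd_add (m n : ℕ) (s : R) :
    risingProd (m + n) s = risingProd m s * risingProd n (s + m) := by
  rw [risingProd, prod_range_add]
  exact congrArg _ (prod_congr rfl fun i _ => by push_cast; ring)

lemma risingProd_eq_neg_one_pow_mul (n : ℕ) (s : R) :
    risingProd n s = (-1) ^ n * risingProd n (-s - (n + 1)) := by
  rw [risingProd, ← prod_range_reflect, ← card_range n, ← prod_const, card_range, risingProd,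
    ← prod_mul_distrib]
  refine prod_congr rfl fun i hi => ?_
  rw [mem_range] at hi
  rw [Nat.sub_sub, Nat.cast_sub (by omega)]
  push_cast
  ring

lemma natCast_ascFactorial (n k : ℕ) :
    (((n + 1).ascFactorial k : ℕ) : R) = risingProd k (n : R) := by
  rw [Nat.ascFactorial_eq_prod_range, Nat.cast_prod]
  exact prod_congr rfl fun i _ => by push_cast; ring

lemma risingProd_zero_right (n : ℕ) : risingProd n (0 : R) = n ! := by
  simpa [Nat.one_ascFactorial] using (natCast_ascFactorial (R := R) 0 n).symm

lemma choose_mul_factorial_eq_risingProd (n k : ℕ) :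
    ((n + k).choose k : R) * k ! = risingProd k (n : R) := by
  rw [← natCast_ascFactorial, Nat.ascFactorial_eq_factorial_mul_choose, Nat.cast_mul, mul_comm]

lemma centralBinom_add_mul (n k : ℕ) :
    ((n + k).centralBinom : R) * risingProd k (n : R) ^ 2 =
      n.centralBinom * risingProd (2 * k) ((2 * n : ℕ) : R) := by
  rw [← natCast_ascFactorial, ← natCast_ascFactorial]
  norm_cast
  refine congrArg Nat.cast (Nat.eq_of_mul_eq_mul_right (pow_pos n.factorial_pos 2) ?_)
  have hcentral (j : ℕ) : j.centralBinom * j ! ^ 2 = (2 * j)! := by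
    have h := Nat.choose_mul_factorial_mul_factorial (show j ≤ 2 * j by omega)
    rwa [show 2 * j - j = j by omega, mul_assoc, ← sq] at h
  calc _ = (n + k).centralBinom * (n ! * (n + 1).ascFactorial k) ^ 2 := by ring
    _ = (2 * n)! * (2 * n + 1).ascFactorial (2 * k) := by
        rw [Nat.factorial_mul_ascFactorial, Nat.factorial_mul_ascFactorial, hcentral, mul_add]
    _ = _ := by rw [← hcentral]; ring

lemma risingProd_two_mul (k : ℕ) (s : R) :
    risingProd (2 * k) (2 * s) =
      2 ^ k * risingProd k s * ∏ i ∈ range k, (2 * s + (2 * (i : R) + 1)) := by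
  induction k with
  | zero => simp [risingProd]
  | succ k ih =>
    rw [show 2 * (k + 1) = 2 * k + 1 + 1 by ring, risingProd_succ, risingProd_succ, ih,
      risingProd_succ, prod_range_succ]
    push_cast
    ring

lemma exists_risingProd_eq_factorial_mul {q : R} (hq : q ^ 3 = 0) {n : ℕ}
    (hn : IsUnit (n ! : R)) :
    ∃ a b : R, ∀ t : R, risingProd n (t * q) = n ! * (1 + a * (t * q) + b * (t * q) ^ 2) := by
  induction n with
  | zero => exact ⟨0, 0, fun t => by simp [risingProd]⟩
  | succ n ih =>
    rw [Nat.factorial_succ, Nat.cast_mul, IsUnit.mul_iff] at hn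
    obtain ⟨a, b, hab⟩ := ih hn.2
    obtain ⟨v, hv⟩ := hn.1.exists_right_inv
    push_cast at hv
    refine ⟨a + v, b + a * v, fun t => ?_⟩
    rw [risingProd_succ, hab, Nat.factorial_succ]
    push_cast
    linear_combination (n ! : R) * b * t ^ 3 * hq - (n ! : R) * (t * q + a * (t * q) ^ 2) * hv

lemma exists_risingProd_eq_truncExp {q : R} (hq : q ^ 3 = 0) (h₂ : IsUnit (2 : R)) {n : ℕ}
    (hn : IsUnit (n ! : R)) :
    ∃ a b : R, ∀ t : R, risingProd n (t * q) = n ! * truncExp q (a * t + q * b * t ^ 2) := by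
  obtain ⟨a, b, hab⟩ := exists_risingProd_eq_factorial_mul hq hn
  obtain ⟨h, hh⟩ := h₂.exists_right_inv
  refine ⟨a * h, h * (b - h * a ^ 2), fun t => ?_⟩
  rw [hab, truncExp]
  congr 1
  grind

end RisingProd

section LogExpansion

variable {R : Type*} [CommRing R] {q x z : R} {k : ℕ}

/-- Shapes of the logarithms of `risingProd (2 * k)`, `risingProd k` and `(-4) ^ k` along the
multiples of `q`, where `4 * k + 1 = 4 * q` and `q ^ 3 = 0`. Modulo the cube of a prime
`p = 4 * k + 1`, every binomial coefficient below is a product of these. -/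
structure LogExpansion (q : R) (k : ℕ) (x z : R) : Prop where
  risingProd_two_mul (n : R) :
    risingProd (2 * k) (n * q) = (2 * k)! * truncExp q (2 * n * x)
  risingProd_self (n : R) :
    risingProd k (n * q) = k ! * truncExp q (3 * n * x + (2 * n + n ^ 2) * q * z)
  neg_four_pow : (-4) ^ k = truncExp q (-2 * x)

lemma risingProd_two_mul_mul_risingProd (hk : 4 * (k : R) + 1 = 4 * q) (n : R) :
    risingProd (2 * k) (2 * n * q) * risingProd k ((-n - 2) * q) =
      (-4) ^ k * (risingProd k (n * q) * risingProd (2 * k) ((-n - 2) * q)) := by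
  have hodd : (-2) ^ k * risingProd k ((-n - 2) * q + k) =
      ∏ i ∈ range k, (2 * (n * q) + (2 * (i : R) + 1)) := by
    rw [risingProd_eq_neg_one_pow_mul, ← mul_assoc, ← mul_pow, risingProd, ← card_range k,
      ← prod_const, card_range, ← prod_mul_distrib]
    exact prod_congr rfl fun i _ => by linear_combination -hk
  rw [mul_assoc 2 n q, risingProd_two_mul, two_mul k, risingProd_add k k, ← hodd,
    show (-4 : R) = 2 * -2 by norm_num, mul_pow]
  ring

lemma neg_four_pow_eq_truncExp (hq : q ^ 3 = 0) (hk : 4 * (k : R) + 1 = 4 * q)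
    (hu : IsUnit ((2 * k)! * k ! : R)) {f g w z : R}
    (hF : ∀ t : R, risingProd (2 * k) (t * q) = (2 * k)! * truncExp q (f * t + q * w * t ^ 2))
    (hG : ∀ t : R, risingProd k (t * q) = k ! * truncExp q (g * t + q * z * t ^ 2)) (n : R) :
    (-4) ^ k = truncExp q (f * (2 * n) + q * w * (2 * n) ^ 2 +
      (g * (-n - 2) + q * z * (-n - 2) ^ 2) -
      (g * n + q * z * n ^ 2 + (f * (-n - 2) + q * w * (-n - 2) ^ 2))) := by
  have h := risingProd_two_mul_mul_risingProd hk n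
  rw [hF, hG, hF, hG, mul_mul_mul_comm, mul_mul_mul_comm (k ! : R), ← truncExp_add hq,
    ← truncExp_add hq, mul_comm (k ! : R)] at h
  refine (eq_mul_truncExp_sub (d := 1) hq (hu.mul_left_cancel ?_)).trans (one_mul _)
  linear_combination -h

lemma exists_logExpansion (hq : q ^ 3 = 0) (hk₀ : 1 ≤ k) (hk : 4 * (k : R) + 1 = 4 * q)
    (hu : IsUnit ((4 * k)! : R)) : ∃ x z : R, LogExpansion q k x z := by
  have h₂ : IsUnit (2 : R) := mod_cast hu.natCast_factorial_of_le (show 2 ≤ 4 * k by omega)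
  have h₃ : IsUnit (3 ! : R) := hu.natCast_factorial_of_le (by omega)
  have hu₁ : IsUnit (k ! : R) := hu.natCast_factorial_of_le (by omega)
  have hu₂ : IsUnit ((2 * k)! : R) := hu.natCast_factorial_of_le (by omega)
  obtain ⟨f, w, hF⟩ := exists_risingProd_eq_truncExp hq h₂ hu₂
  obtain ⟨g, z, hG⟩ := exists_risingProd_eq_truncExp hq h₂ hu₁
  have hκ := neg_four_pow_eq_truncExp hq hk (hu₂.mul hu₁) hF hG
  -- Comparing the values at `n = 0, -1, -2` kills `w` and ties `g` to `f` and `z`.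
  have h₀₁ := mul_eq_mul_of_truncExp_eq hq h₂ ((hκ 0).symm.trans (hκ (-1)))
  have h₁₂ := mul_eq_mul_of_truncExp_eq hq h₂ ((hκ (-1)).symm.trans (hκ (-2)))
  have hw : q ^ 2 * w = 0 := by
    apply h₃.mul_left_cancel
    rw [Nat.factorial, Nat.factorial_two]
    push_cast
    linear_combination h₀₁ - h₁₂
  have hg : q * (2 * g) = q * (3 * f + 4 * q * z) := by linear_combination -h₀₁ - 7 * hw
  obtain ⟨h, hh⟩ := h₂.exists_right_inv
  refine ⟨f * h, z, fun n => ?_, fun n => ?_, ?_⟩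
  · rw [hF]
    exact congrArg _ (truncExp_congr (by linear_combination n ^ 2 * hw - q * n * f * hh))
  · rw [hG]
    refine congrArg _ (truncExp_congr ?_)
    linear_combination h * n * hg - q * n * g * hh + 2 * n * q ^ 2 * z * hh
  · rw [hκ (-1)]
    exact truncExp_congr (by linear_combination 3 * hw + q * f * hh)

end LogExpansion

section Binomials

variable {R : Type*} [CommRing R] {q x z : R} {k : ℕ}

lemma natCast_factorial_two_mul (k : ℕ) : ((2 * k)! : R) = (2 * k).choose k * k ! ^ 2 := by
  rw [two_mul, ← Nat.add_choose_mul_factorial_mul_factorial k k]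
  push_cast
  ring

lemma evenProd_four_mul (k : ℕ) (q : R) :
    evenProd k (4 * q) = (-16) ^ k * (risingProd k q * risingProd k (-q)) := by
  rw [evenProd, risingProd, risingProd, ← prod_mul_distrib, ← card_range k, ← prod_const,
    card_range, ← prod_mul_distrib]
  exact prod_congr rfl fun i _ => by ring

lemma four_pow_mul_oddProd_mul (k : ℕ) (q : R) :
    4 ^ k * oddProd k (4 * q) * (risingProd k q * risingProd k (-q)) =
      (-4) ^ k * (risingProd (2 * k) (2 * q) * risingProd (2 * k) (2 * -q)) := by
  have hodd : oddProd k (4 * q) = (-4) ^ k * ((∏ i ∈ range k, (2 * q + (2 * (i : R) + 1))) *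
      ∏ i ∈ range k, (2 * -q + (2 * (i : R) + 1))) := by
    rw [oddProd, ← prod_mul_distrib, ← card_range k, ← prod_const, card_range, ← prod_mul_distrib]
    exact prod_congr rfl fun i _ => by ring
  rw [hodd, risingProd_two_mul, risingProd_two_mul, show (4 : R) = 2 * 2 by norm_num, mul_pow]
  ring

namespace LogExpansion

lemma choose_eq (h : LogExpansion q k x z) (hq : q ^ 3 = 0) (hu : IsUnit (k ! : R)) {a : ℕ} {n : R}
    (ha : (a : R) = n * q) :
    ((a + 2 * k).choose k : R) =
      (2 * k).choose k * truncExp q (2 * n * x - (3 * n * x + (2 * n + n ^ 2) * q * z)) := by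
  apply eq_mul_truncExp_sub hq
  apply (hu.mul hu).mul_right_cancel
  have hchoose := choose_mul_factorial_eq_risingProd (R := R) (a + k) k
  rw [add_assoc, ← two_mul, Nat.cast_add, ha] at hchoose
  have hadd := risingProd_add k k (n * q)
  rw [← two_mul, ← hchoose, h.risingProd_two_mul, h.risingProd_self,
    natCast_factorial_two_mul] at hadd
  linear_combination -hadd

/-- Wolstenholme's congruence, read off from the expansion. -/
lemma centralBinom_four_mul_add_one (h : LogExpansion q k x z) (hq : q ^ 3 = 0)
    (hk : 4 * (k : R) + 1 = 4 * q) (hu : IsUnit ((4 * k)! : R)) :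
    ((4 * k + 1).centralBinom : R) = 2 := by
  have hsplit (n : R) : risingProd (4 * k) (n * q) =
      (2 * k)! ^ 2 * (truncExp q (2 * n * x) * truncExp q (2 * (-n - 4) * x)) := by
    rw [show 4 * k = 2 * k + 2 * k by ring, risingProd_add,
      risingProd_eq_neg_one_pow_mul (2 * k) (n * q + _), h.risingProd_two_mul,
      show -(n * q + ((2 * k : ℕ) : R)) - ((2 * k : ℕ) + 1) = (-n - 4) * q by
        push_cast; linear_combination -hk, h.risingProd_two_mul, Even.neg_one_pow (by simp)]
    ring
  have hwolstenholme : ((4 * k + 1 + 4 * k).choose (4 * k) : R) = 1 := by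
    apply hu.mul_right_cancel
    rw [choose_mul_factorial_eq_risingProd, one_mul, ← risingProd_zero_right,
      show ((4 * k + 1 : ℕ) : R) = 4 * q by exact_mod_cast hk, ← zero_mul q, hsplit, hsplit,
      ← truncExp_add hq, ← truncExp_add hq]
    ring_nf
  have hhalf : (4 * k + 1).centralBinom = 2 * (4 * k + 1 + 4 * k).choose (4 * k) := by
    rw [Nat.centralBinom, show 2 * (4 * k + 1) = 4 * k + 1 + 4 * k + 1 by ring,
      Nat.choose_succ_succ,
      ← Nat.choose_symm_of_eq_add (show 4 * k + 1 + 4 * k = (4 * k + 1) + 4 * k by rfl)]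
    ring
  rw [hhalf, Nat.cast_mul, hwolstenholme]
  norm_num

lemma centralBinom_eq (h : LogExpansion q k x z) (hq : q ^ 3 = 0) (hk : 4 * (k : R) + 1 = 4 * q)
    (hu : IsUnit ((4 * k)! : R)) :
    ((4 * k + 1 + k).centralBinom : R) =
      2 * (2 * k).choose k * truncExp q (-8 * x - 48 * q * z) := by
  have hu₁ : IsUnit (k ! : R) := hu.natCast_factorial_of_le (by omega)
  have hcentral := centralBinom_add_mul (R := R) (4 * k + 1) k
  have ha : ((4 * k + 1 : ℕ) : R) = 4 * q := by exact_mod_cast hk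
  rw [h.centralBinom_four_mul_add_one hq hk hu, Nat.cast_mul, ha, Nat.cast_ofNat, ← mul_assoc,
    h.risingProd_self, h.risingProd_two_mul, natCast_factorial_two_mul, mul_pow,
    sq (truncExp _ _), ← truncExp_add hq]
    at hcentral
  rw [show -8 * x - 48 * q * z = 2 * (2 * 4) * x - (3 * 4 * x + (2 * 4 + 4 ^ 2) * q * z +
    (3 * 4 * x + (2 * 4 + 4 ^ 2) * q * z)) by ring]
  apply eq_mul_truncExp_sub hq
  apply (hu₁.pow 2).mul_right_cancel
  linear_combination hcentral

lemma choose_six_mul (h : LogExpansion q k x z) (hq : q ^ 3 = 0) (hk : 4 * (k : R) + 1 = 4 * q)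
    (hu : IsUnit (k ! : R)) :
    ((6 * k).choose k : R) * (24 * q - 2) =
      (2 * k).choose k * truncExp q (-4 * x - 24 * q * z) * (20 * q - 1) := by
  have hchoose := h.choose_eq hq hu (a := 4 * k + 1) (n := 4) (by exact_mod_cast hk)
  have hstep := congrArg (Nat.cast : ℕ → R) (Nat.choose_mul_succ_eq (6 * k) k)
  rw [show 6 * k + 1 - k = 5 * k + 1 by omega, show 6 * k + 1 = 4 * k + 1 + 2 * k by ring,
    Nat.cast_mul, Nat.cast_mul, hchoose,
    show 2 * 4 * x - (3 * 4 * x + (2 * 4 + 4 ^ 2) * q * z) = -4 * x - 24 * q * z by ring] at hstep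
  push_cast at hstep
  linear_combination 4 * hstep - 6 * ((6 * k).choose k : R) * hk +
    5 * ((2 * k).choose k * truncExp q (-4 * x - 24 * q * z)) * hk

lemma choose_ten_mul (h : LogExpansion q k x z) (hq : q ^ 3 = 0) (hk : 4 * (k : R) + 1 = 4 * q)
    (hu : IsUnit (k ! : R)) :
    ((10 * k).choose k : R) * ((40 * q - 6) * (40 * q - 2)) =
      (2 * k).choose k * truncExp q (-8 * x - 80 * q * z) * ((36 * q - 5) * (36 * q - 1)) := by
  have hchoose := h.choose_eq hq hu (a := 2 * (4 * k + 1)) (n := 8)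
    (by push_cast; linear_combination 2 * hk)
  have hstep₁ := congrArg (Nat.cast : ℕ → R) (Nat.choose_mul_succ_eq (10 * k) k)
  have hstep₂ := congrArg (Nat.cast : ℕ → R) (Nat.choose_mul_succ_eq (10 * k + 1) k)
  rw [show 10 * k + 1 - k = 9 * k + 1 by omega] at hstep₁
  rw [show 10 * k + 1 + 1 - k = 9 * k + 2 by omega,
    show 10 * k + 1 + 1 = 2 * (4 * k + 1) + 2 * k by ring, Nat.cast_mul, Nat.cast_mul, hchoose,
    show 2 * 8 * x - (3 * 8 * x + (2 * 8 + 8 ^ 2) * q * z) = -8 * x - 80 * q * z by ring] at hstep₂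
  push_cast at hstep₁ hstep₂
  have hk₉₁ : 4 * (9 * (k : R) + 1) = 36 * q - 5 := by linear_combination 9 * hk
  have hk₉₂ : 4 * (9 * (k : R) + 2) = 36 * q - 1 := by linear_combination 9 * hk
  have hk₁₀₁ : 4 * (10 * (k : R) + 1) = 40 * q - 6 := by linear_combination 10 * hk
  have hk₁₀₂ : 4 * (10 * (k : R) + 2) = 40 * q - 2 := by linear_combination 10 * hk
  rw [← hk₉₁, ← hk₉₂, ← hk₁₀₁, ← hk₁₀₂]
  linear_combination 16 * (10 * (k : R) + 2) * hstep₁ + 16 * (9 * (k : R) + 1) * hstep₂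

lemma centralBinom_five_mul (h : LogExpansion q k x z) (hq : q ^ 3 = 0)
    (hk : 4 * (k : R) + 1 = 4 * q) (h₂ : IsUnit (2 : R)) (hu : IsUnit ((4 * k)! : R)) :
    ((5 * k).centralBinom : R) * (40 * q - 6) =
      (2 * k).choose k * truncExp q (-8 * x - 48 * q * z) * (20 * q - 1) := by
  have hstep := congrArg (Nat.cast : ℕ → R) (Nat.succ_mul_centralBinom_succ (5 * k))
  rw [show 5 * k + 1 = 4 * k + 1 + k by ring, Nat.cast_mul, h.centralBinom_eq hq hk hu] at hstep
  push_cast at hstep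
  apply h₂.mul_left_cancel
  linear_combination -4 * hstep - 20 * (5 * k).centralBinom * hk +
    10 * ((2 * k).choose k * truncExp q (-8 * x - 48 * q * z)) * hk

lemma eq_neg_one_pow_mul_truncExp (h : LogExpansion q k x z) (hq : q ^ 3 = 0)
    (hk : 4 * (k : R) + 1 = 4 * q) (hu : IsUnit ((4 * k)! : R)) (h₂ : IsUnit (2 : R))
    (h₃ : IsUnit (3 : R)) {u : R}
    (h8 : 8 * u = 4 * k * (-1) ^ k * (15 * (2 * k).choose k - 20 * (6 * k).choose k +
      6 * (10 * k).choose k + 3 * (5 * k).centralBinom)) :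
    u = -(-1) ^ k * (2 * k).choose k * truncExp q (2 * x + 2 * q * z) := by
  have hu₁ : IsUnit (k ! : R) := hu.natCast_factorial_of_le (by omega)
  have h8u : IsUnit (8 : R) := by
    rw [show (8 : R) = 2 ^ 3 by norm_num]
    exact h₂.pow 3
  have h6u : IsUnit (6 : R) := by
    rw [show (6 : R) = 2 * 3 by norm_num]
    exact h₂.mul h₃
  have hpoly : (4 * q - 1) * (15 * ((24 * q - 2) * ((40 * q - 6) * (40 * q - 2))) -
      20 * (truncExp q (-4 * x - 24 * q * z) * (20 * q - 1)) * ((40 * q - 6) * (40 * q - 2)) +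
      6 * (truncExp q (-8 * x - 80 * q * z) * ((36 * q - 5) * (36 * q - 1))) * (24 * q - 2) +
      3 * (truncExp q (-8 * x - 48 * q * z) * (20 * q - 1)) * ((24 * q - 2) * (40 * q - 2))) =
      -(8 * ((24 * q - 2) * ((40 * q - 6) * (40 * q - 2))) * truncExp q (2 * x + 2 * q * z)) := by
    clear h8 hk hu h hu₁ h8u h6u h₂ h₃
    unfold truncExp
    grind
  apply (h8u.mul ((isUnit_mul_sub hq h₂ 24).mul
    ((isUnit_mul_sub hq h6u 40).mul (isUnit_mul_sub hq h₂ 40)))).mul_left_cancel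
  have hk' : 4 * (k : R) = 4 * q - 1 := by linear_combination hk
  rw [hk'] at h8
  linear_combination ((24 * q - 2) * ((40 * q - 6) * (40 * q - 2))) * h8 +
    (4 * q - 1) * (-1) ^ k * (-20 * ((40 * q - 6) * (40 * q - 2)) * h.choose_six_mul hq hk hu₁ +
      6 * (24 * q - 2) * h.choose_ten_mul hq hk hu₁ +
      3 * ((24 * q - 2) * (40 * q - 2)) * h.centralBinom_five_mul hq hk h₂ hu) +
    (-1) ^ k * (2 * k).choose k * hpoly

lemma neg_one_pow_mul_choose_three_mul (h : LogExpansion q k x z) (hq : q ^ 3 = 0)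
    (hk : 4 * (k : R) + 1 = 4 * q) (hu : IsUnit (k ! : R)) :
    (-1) ^ k * ((2 * k).choose k : R) * (3 * k).choose k =
      (2 * k).choose k ^ 2 * truncExp q (4 * x - 8 * q * z) := by
  rw [show 4 * x - 8 * q * z =
    2 * (-4) * x - (3 * (-4) * x + (2 * (-4) + (-4) ^ 2) * q * z) by ring]
  apply eq_mul_truncExp_sub hq
  apply (hu.mul hu).mul_right_cancel
  have hc := choose_mul_factorial_eq_risingProd (R := R) k k
  have hc₃ := choose_mul_factorial_eq_risingProd (R := R) (2 * k) k
  have hfact := risingProd_add k k (0 : R)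
  rw [← two_mul, risingProd_zero_right, risingProd_zero_right, zero_add, ← hc, ← two_mul] at hfact
  have hreflect := risingProd_add k k (-4 * q)
  rw [← two_mul, risingProd_eq_neg_one_pow_mul k (-4 * q + k),
    show -(-4 * q + (k : R)) - (k + 1) = ((2 * k : ℕ) : R) by
      push_cast; linear_combination -hk,
    ← hc₃, h.risingProd_two_mul, h.risingProd_self, natCast_factorial_two_mul,
    show 2 * k + k = 3 * k by ring]
    at hreflect
  linear_combination -((2 * k).choose k : R) * hreflect

lemma risingProd_self_mul_neg (h : LogExpansion q k x z) (hq : q ^ 3 = 0) (n : R) :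
    risingProd k (n * q) * risingProd k (-n * q) = k ! ^ 2 * truncExp q (2 * n ^ 2 * q * z) := by
  rw [h.risingProd_self, h.risingProd_self, mul_mul_mul_comm, ← truncExp_add hq]
  ring_nf

lemma evenProd_eq (h : LogExpansion q k x z) (hq : q ^ 3 = 0) :
    evenProd k (4 * q) = (-16) ^ k * (k ! ^ 2 * truncExp q (2 * q * z)) := by
  simpa [evenProd_four_mul] using congrArg ((-16) ^ k * ·) (h.risingProd_self_mul_neg hq 1)

lemma prod_four_mul_sq_sub_eq (h : LogExpansion q k x z) (hq : q ^ 3 = 0) :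
    ∏ i ∈ range k, (4 * ((i : R) + 1) ^ 2 - (4 * q) ^ 2) =
      4 ^ k * (k ! ^ 2 * truncExp q (8 * q * z)) := by
  have hsplit : ∏ i ∈ range k, (4 * ((i : R) + 1) ^ 2 - (4 * q) ^ 2) =
      4 ^ k * (risingProd k (2 * q) * risingProd k (-2 * q)) := by
    rw [risingProd, risingProd, ← prod_mul_distrib, ← card_range k, ← prod_const, card_range,
      ← prod_mul_distrib]
    exact prod_congr rfl fun i _ => by ring
  rw [hsplit, h.risingProd_self_mul_neg hq]
  ring_nf

lemma oddProd_eq (h : LogExpansion q k x z) (hq : q ^ 3 = 0) (h₂ : IsUnit (2 : R))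
    (hu : IsUnit (k ! : R)) :
    oddProd k (4 * q) =
      (2 * k).choose k ^ 2 * truncExp q (4 * x - 4 * q * z) * evenProd k (4 * q) := by
  have hdouble := four_pow_mul_oddProd_mul k q
  have hself := h.risingProd_self_mul_neg hq 1
  rw [one_mul, neg_one_mul] at hself
  have hneg : truncExp q (2 * 2 * x) * truncExp q (2 * -2 * x) = 1 := by
    rw [← truncExp_mul_truncExp_neg hq (2 * 2 * x)]
    ring_nf
  have hpow : (4 : R) ^ k * (-16) ^ k = (-4) ^ k * ((-4) ^ k * (-4) ^ k) := by
    simp only [← mul_pow]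
    norm_num
  have hexp : (-4) ^ k * (-4) ^ k * (truncExp q (4 * x - 4 * q * z) *
      (truncExp q (2 * q * z) * truncExp q (2 * q * z))) = 1 := by
    simp only [h.neg_four_pow, ← truncExp_add hq]
    rw [← truncExp_zero (q := q)]
    ring_nf
  have hunit : IsUnit ((4 : R) ^ k * (k ! ^ 2 * truncExp q (2 * q * z))) := by
    rw [show (4 : R) = 2 ^ 2 by norm_num]
    exact ((h₂.pow 2).pow k).mul ((hu.pow 2).mul (isUnit_truncExp hq _))
  apply hunit.mul_left_cancel
  rw [hself, show 2 * -q = -2 * q by ring, h.risingProd_two_mul, h.risingProd_two_mul,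
    natCast_factorial_two_mul, one_pow, mul_one] at hdouble
  rw [h.evenProd_eq hq]
  linear_combination hdouble + (-4) ^ k * ((2 * k).choose k * k ! ^ 2 : R) ^ 2 * (hneg - hexp) -
    ((2 * k).choose k * k ! ^ 2 : R) ^ 2 * (truncExp q (4 * x - 4 * q * z) *
      (truncExp q (2 * q * z) * truncExp q (2 * q * z))) * hpow

/-- The `LogExpansion` parameters cancel in this comparison of the hypergeometric sums with the
character sum `u`. -/
lemma oddProd_mul_add_eq (h : LogExpansion q k x z) (hq : q ^ 3 = 0)
    (hk : 4 * (k : R) + 1 = 4 * q) (hu : IsUnit ((4 * k)! : R)) (h₂ : IsUnit (2 : R))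
    (h₃ : IsUnit (3 : R)) {u : R}
    (h8 : 8 * u = 4 * k * (-1) ^ k * (15 * (2 * k).choose k - 20 * (6 * k).choose k +
      6 * (10 * k).choose k + 3 * (5 * k).centralBinom)) :
    oddProd k (4 * q) * (4 ^ k * k ! ^ 2) + (-1) ^ k * (2 * k).choose k * (3 * k).choose k *
      (∏ i ∈ range k, (4 * ((i : R) + 1) ^ 2 - (4 * q) ^ 2) - 4 ^ k * k ! ^ 2) *
        evenProd k (4 * q) =
      u ^ 2 * evenProd k (4 * q) * (4 ^ k * k ! ^ 2) := by
  have hu₁ : IsUnit (k ! : R) := hu.natCast_factorial_of_le (by omega)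
  have hexp : truncExp q (4 * x - 4 * q * z) +
      truncExp q (4 * x - 8 * q * z) * (truncExp q (8 * q * z) - 1) =
      truncExp q (2 * x + 2 * q * z) ^ 2 := by
    clear h8 hk hu hu₁ h₂ h₃
    unfold truncExp
    grind
  have hsign : ((-1 : R) ^ k) ^ 2 = 1 := by rw [← pow_mul, mul_comm, pow_mul]; norm_num
  rw [h.oddProd_eq hq h₂ hu₁, h.neg_one_pow_mul_choose_three_mul hq hk hu₁,
    h.prod_four_mul_sq_sub_eq hq, h.eq_neg_one_pow_mul_truncExp hq hk hu h₂ h₃ h8]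
  linear_combination (((2 * k).choose k : R) ^ 2 * evenProd k (4 * q) * 4 ^ k * k ! ^ 2) *
    (hexp - truncExp q (2 * x + 2 * q * z) ^ 2 * hsign)

end LogExpansion

end Binomials

section Teichmuller

lemma mulChar_sum_eq_zero_of_isUnit_sub_one {F R : Type*} [Field F] [Fintype F] [CommRing R]
    {χ : MulChar F R} {g : F} (hg : g ≠ 0) (h : IsUnit (χ g - 1)) : ∑ a, χ a = 0 := by
  apply h.mul_right_eq_zero.1
  rw [sub_mul, one_mul, sub_eq_zero, mul_sum]
  simp only [← map_mul]
  exact Fintype.sum_bijective _ (mulLeft_bijective₀ g hg) _ _ fun a => rfl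

variable (p n : ℕ) [NeZero n]

/-- Reduction modulo `p` of residues modulo `p ^ n`. -/
def reduction : ZMod (p ^ n) →+* ZMod p := ZMod.castHom (dvd_pow_self p (NeZero.ne n)) _

lemma natCast_self_pow_eq_zero (p n : ℕ) : (p : ZMod (p ^ n)) ^ n = 0 :=
  mod_cast ZMod.natCast_self (p ^ n)

variable {p n}

lemma natCast_dvd_of_reduction_eq_zero {r : ZMod (p ^ n)} (h : reduction p n r = 0) :
    (p : ZMod (p ^ n)) ∣ r := by
  obtain ⟨z, rfl⟩ := ZMod.intCast_surjective r
  rw [map_intCast, ZMod.intCast_zmod_eq_zero_iff_dvd] at h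
  simpa using map_dvd (Int.castRingHom (ZMod (p ^ n))) h

lemma pow_eq_pow_of_reduction_eq {r s : ZMod (p ^ n)} (h : reduction p n r = reduction p n s) :
    r ^ p ^ (n - 1) = s ^ p ^ (n - 1) := by
  have hdvd := dvd_sub_pow_of_dvd_sub
    (natCast_dvd_of_reduction_eq_zero (r := r - s) (by rw [map_sub, h, sub_self])) (n - 1)
  rwa [Nat.sub_one_add_one (NeZero.ne n), natCast_self_pow_eq_zero, zero_dvd_iff, sub_eq_zero]
    at hdvd

variable [Fact p.Prime]

lemma isUnit_of_reduction_ne_zero {r : ZMod (p ^ n)} (h : reduction p n r ≠ 0) : IsUnit r := by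
  obtain ⟨z, rfl⟩ := ZMod.intCast_surjective r
  rw [map_intCast, Ne, ZMod.intCast_zmod_eq_zero_iff_dvd] at h
  rw [ZMod.coe_int_isUnit_iff_isCoprime, Nat.cast_pow]
  exact ((Nat.prime_iff_prime_int.1 Fact.out).coprime_iff_not_dvd.2 h).pow_left

variable (p n) in
/-- The Teichmüller character modulo `p ^ n`: each residue modulo `p` goes to its unique lift which
is `0` or a `(p - 1)`-st root of unity, namely the `p ^ (n - 1)`-st power of any lift. -/
def teichmuller : MulChar (ZMod p) (ZMod (p ^ n)) where
  toFun a := (a.val : ZMod (p ^ n)) ^ p ^ (n - 1)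
  map_one' := by
    refine (pow_eq_pow_of_reduction_eq (s := 1) ?_).trans (one_pow _)
    rw [map_natCast, ZMod.natCast_zmod_val, map_one]
  map_mul' a b := by
    rw [← mul_pow]
    apply pow_eq_pow_of_reduction_eq
    simp only [map_mul, map_natCast, ZMod.natCast_zmod_val]
  map_nonunit' a ha := by
    rw [isUnit_iff_ne_zero, not_not] at ha
    simp [ha, (Fact.out : p.Prime).ne_zero]

lemma teichmuller_reduction (r : ZMod (p ^ n)) :
    teichmuller p n (reduction p n r) = r ^ p ^ (n - 1) :=
  pow_eq_pow_of_reduction_eq (by rw [map_natCast, ZMod.natCast_zmod_val])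

lemma reduction_teichmuller (a : ZMod p) : reduction p n (teichmuller p n a) = a := by
  change reduction p n ((a.val : ZMod (p ^ n)) ^ p ^ (n - 1)) = a
  rw [map_pow, map_natCast, ZMod.natCast_zmod_val, ZMod.pow_card_pow]

lemma teichmuller_one_sub (a : ZMod p) :
    teichmuller p n (1 - a) = (1 - teichmuller p n a) ^ p ^ (n - 1) := by
  rw [← teichmuller_reduction (1 - teichmuller p n a), map_sub (reduction p n), map_one,
    reduction_teichmuller]

lemma teichmuller_pow_card_sub_one : teichmuller p n ^ (p - 1) = 1 := by
  rw [← ZMod.card_units p]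
  exact MulChar.pow_card_eq_one _

lemma sum_teichmuller_pow {e : ℕ} (he : e ≠ 0) :
    ∑ a, teichmuller p n a ^ e = if p - 1 ∣ e then ((p - 1 : ℕ) : ZMod (p ^ n)) else 0 := by
  simp only [← MulChar.pow_apply' _ he]
  split_ifs with h
  · obtain ⟨t, rfl⟩ := h
    rw [pow_mul, teichmuller_pow_card_sub_one, one_pow, MulChar.sum_one_eq_card_units,
      ZMod.card_units]
  · obtain ⟨g, hg⟩ := IsCyclic.exists_ofOrder_eq_natCard (α := (ZMod p)ˣ)
    rw [Nat.card_eq_fintype_card, ZMod.card_units] at hg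
    refine mulChar_sum_eq_zero_of_isUnit_sub_one g.ne_zero (isUnit_of_reduction_ne_zero ?_)
    rw [MulChar.pow_apply_coe, map_sub, map_pow, reduction_teichmuller, map_one, sub_ne_zero]
    exact fun hpow => h (hg ▸ orderOf_dvd_of_pow_eq_one (Units.ext (by simpa using hpow)))

lemma sum_teichmuller_pow_mul_one_sub_pow {e : ℕ} (he : e ≠ 0) (N : ℕ) :
    ∑ a, teichmuller p n a ^ e * (1 - teichmuller p n a) ^ N =
      (p - 1 : ℕ) * ∑ j ∈ range (N + 1) with p - 1 ∣ e + j, (-1) ^ j * (N.choose j : ZMod _) := by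
  have hexpand (a : ZMod p) : teichmuller p n a ^ e * (1 - teichmuller p n a) ^ N =
      ∑ j ∈ range (N + 1), (-1) ^ j * (N.choose j : ZMod _) * teichmuller p n a ^ (e + j) := by
    rw [sub_eq_neg_add, add_pow, mul_sum]
    refine sum_congr rfl fun j _ => ?_
    rw [neg_pow]
    ring
  simp only [hexpand]
  rw [sum_comm, mul_sum, sum_filter]
  refine sum_congr rfl fun j _ => ?_
  rw [← mul_sum, sum_teichmuller_pow (by omega)]
  split_ifs <;> ring

end Teichmuller

section JacobiSum

lemma two_mul_one_add_pow {R : Type*} [CommRing R] {s : R} (hs : s ^ 3 = 0) (n : ℕ) :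
    2 * (1 + s) ^ n = 2 + 2 * n * s + n * (n - 1) * s ^ 2 := by
  induction n with
  | zero => simp
  | succ n ih =>
    rw [pow_succ, ← mul_assoc, ih]
    push_cast
    linear_combination (n * (n - 1) : R) * hs

/-- With `b ^ (4 * k) = 1 + s`, both sides are `8 * b ^ (2 * k)` times the expansion of
`(1 + s) ^ (-1 / 2)` modulo `s ^ 3`. -/
lemma eight_mul_pow_mul_sq {R : Type*} [CommRing R] {p k : ℕ} (hpk : p = 4 * k + 1)
    (hp : (p : R) ^ 3 = 0) {b : R} (hb : (p : R) ∣ b ^ (4 * k) - 1) :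
    8 * b ^ (2 * k * p ^ 2) = 15 * b ^ (2 * k) - 10 * b ^ (6 * k) + 3 * b ^ (10 * k) := by
  obtain ⟨t, ht⟩ := hb
  obtain ⟨s, hs⟩ : ∃ s, s = b ^ (4 * k) - 1 := ⟨_, rfl⟩
  rw [← hs] at ht
  have hs₃ : s ^ 3 = 0 := by rw [ht, mul_pow, hp, zero_mul]
  have hps : (p : R) * s ^ 2 = 0 := by rw [ht]; linear_combination t ^ 2 * hp
  have hps₂ : (p : R) ^ 2 * s = 0 := by rw [ht]; linear_combination t * hp
  have hpow : b ^ (4 * k) = 1 + s := by rw [hs]; ring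
  have hexp := two_mul_one_add_pow hs₃ (8 * k ^ 2 + 4 * k)
  have h₆ : b ^ (6 * k) = b ^ (2 * k) * (1 + s) := by rw [← hpow]; ring
  have h₁₀ : b ^ (10 * k) = b ^ (2 * k) * (1 + s) ^ 2 := by rw [← hpow]; ring
  rw [show 2 * k * p ^ 2 = 2 * k + 4 * k * (8 * k ^ 2 + 4 * k) by rw [hpk]; ring, pow_add,
    pow_mul b (4 * k), hpow, h₆, h₁₀]
  rw [hpk] at hps hps₂
  push_cast at hexp hps hps₂
  linear_combination 4 * b ^ (2 * k) * hexp +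
    b ^ (2 * k) * (4 * hps₂ + ((4 * k + 1) ^ 3 - 4 * (4 * k + 1)) * hps)

lemma filter_range_four_mul_dvd {k : ℕ} (hk : 1 ≤ k) :
    {j ∈ range (10 * k + 1) | 4 * k ∣ 3 * k + j} = {k, 5 * k, 9 * k} := by
  ext j
  simp only [mem_filter, mem_range, mem_insert, mem_singleton]
  constructor
  · rintro ⟨hj, t, ht⟩
    have ht₄ : t < 4 := by
      by_contra! h
      have := Nat.mul_le_mul_left (4 * k) h
      omega
    interval_cases t <;> omega
  · rintro (rfl | rfl | rfl)
    · exact ⟨by omega, 1, by ring⟩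
    · exact ⟨by omega, 2, by ring⟩
    · exact ⟨by omega, 3, by ring⟩

variable {p k : ℕ} [Fact p.Prime]

lemma sum_teichmuller_pow_three_mul (hk : 1 ≤ k) (hpk : p = 4 * k + 1) {N : ℕ} (hN : N ≤ 10 * k) :
    ∑ a, teichmuller p 3 a ^ (3 * k) * (1 - teichmuller p 3 a) ^ N =
      4 * k * (-1) ^ k * (N.choose k + N.choose (5 * k) + N.choose (9 * k)) := by
  rw [sum_teichmuller_pow_mul_one_sub_pow (by omega), show p - 1 = 4 * k by omega, sum_filter,
    sum_subset (range_mono (show N + 1 ≤ 10 * k + 1 by omega)), ← sum_filter,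
    filter_range_four_mul_dvd hk, sum_insert (by simp; omega), sum_pair (by omega)]
  · have h₅ : (-1 : ZMod (p ^ 3)) ^ (5 * k) = (-1) ^ k := by rw [pow_mul]; norm_num
    have h₉ : (-1 : ZMod (p ^ 3)) ^ (9 * k) = (-1) ^ k := by rw [pow_mul]; norm_num
    rw [h₅, h₉]
    push_cast
    ring
  · intro j _ hj
    rw [mem_range, not_lt] at hj
    rw [Nat.choose_eq_zero_of_lt (by omega), Nat.cast_zero, mul_zero, ite_self]

lemma eight_mul_teichmuller_one_sub_pow (hk : 1 ≤ k) (hpk : p = 4 * k + 1) {a : ZMod p} :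
    8 * teichmuller p 3 (1 - a) ^ (2 * k) = 15 * (1 - teichmuller p 3 a) ^ (2 * k) -
      10 * (1 - teichmuller p 3 a) ^ (6 * k) + 3 * (1 - teichmuller p 3 a) ^ (10 * k) := by
  obtain rfl | ha := eq_or_ne a 1
  · have hk₀ : k ≠ 0 := by omega
    simp [hk₀, MulChar.map_zero]
  · rw [teichmuller_one_sub, ← pow_mul, mul_comm _ (2 * k)]
    refine eight_mul_pow_mul_sq hpk (natCast_self_pow_eq_zero p 3)
      (natCast_dvd_of_reduction_eq_zero ?_)
    rw [map_sub, map_pow, map_sub, map_one, reduction_teichmuller, show 4 * k = p - 1 by omega,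
      ZMod.pow_card_sub_one_eq_one (sub_ne_zero.2 ha.symm), sub_self]

lemma eight_mul_jacobiSum_teichmuller (hk : 1 ≤ k) (hpk : p = 4 * k + 1) :
    8 * jacobiSum (teichmuller p 3 ^ (3 * k)) (teichmuller p 3 ^ (2 * k)) =
      4 * k * (-1) ^ k * (15 * (2 * k).choose k - 20 * (6 * k).choose k +
        6 * (10 * k).choose k + 3 * (5 * k).centralBinom) := by
  have hterm (a : ZMod p) :
      8 * ((teichmuller p 3 ^ (3 * k)) a * (teichmuller p 3 ^ (2 * k)) (1 - a)) =
        15 * (teichmuller p 3 a ^ (3 * k) * (1 - teichmuller p 3 a) ^ (2 * k)) -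
        10 * (teichmuller p 3 a ^ (3 * k) * (1 - teichmuller p 3 a) ^ (6 * k)) +
        3 * (teichmuller p 3 a ^ (3 * k) * (1 - teichmuller p 3 a) ^ (10 * k)) := by
    rw [MulChar.pow_apply' _ (by omega), MulChar.pow_apply' _ (by omega)]
    linear_combination teichmuller p 3 a ^ (3 * k) *
      eight_mul_teichmuller_one_sub_pow hk hpk (a := a)
  rw [jacobiSum, mul_sum, sum_congr rfl fun a _ => hterm a, sum_add_distrib, sum_sub_distrib,
    ← mul_sum, ← mul_sum, ← mul_sum, sum_teichmuller_pow_three_mul hk hpk (by omega),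
    sum_teichmuller_pow_three_mul hk hpk (by omega), sum_teichmuller_pow_three_mul hk hpk le_rfl,
    Nat.choose_eq_zero_of_lt (show 2 * k < 5 * k by omega),
    Nat.choose_eq_zero_of_lt (show 2 * k < 9 * k by omega),
    Nat.choose_eq_zero_of_lt (show 6 * k < 9 * k by omega),
    Nat.choose_symm_of_eq_add (show 6 * k = 5 * k + k by ring),
    Nat.choose_symm_of_eq_add (show 10 * k = 9 * k + k by ring), Nat.centralBinom,
    show 2 * (5 * k) = 10 * k by ring]
  push_cast
  ring

end JacobiSum

section GaussianJacobiSum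

lemma sq_eq_sq_of_prime_dvd_mul_sub_mul {p a b x w : ℤ} (hp : Prime p) (hab : a ^ 2 + b ^ 2 = p)
    (hxw : x ^ 2 + w ^ 2 = p) (hne : a * x - b * w ≠ 0) (hd : p ∣ a * x - b * w) :
    a ^ 2 = x ^ 2 := by
  have hbrahmagupta : (a * x - b * w) ^ 2 + (a * w + b * x) ^ 2 = p ^ 2 := by
    linear_combination (x ^ 2 + w ^ 2) * hab + p * hxw
  have hle : p ^ 2 ≤ (a * x - b * w) ^ 2 :=
    Int.le_of_dvd (by positivity) (pow_dvd_pow_of_dvd hd 2)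
  have hzero : a * w + b * x = 0 := by
    rw [← sq_eq_zero_iff]
    nlinarith [sq_nonneg (a * w + b * x)]
  refine mul_left_cancel₀ hp.ne_zero ?_
  linear_combination x ^ 2 * hab - a ^ 2 * hxw + (a * w - b * x) * hzero

lemma sq_eq_sq_of_sq_add_sq_eq_prime {p a b x w : ℤ} (hp : Prime p) (hab : a ^ 2 + b ^ 2 = p)
    (hxw : x ^ 2 + w ^ 2 = p) (ha : Odd a) (hb : Even b) (hw : Even w) : a ^ 2 = x ^ 2 := by
  have hx : Odd x := by
    have hodd : Odd (x ^ 2 + w ^ 2) := hxw ▸ hab ▸ ha.pow.add_even (hb.pow_of_ne_zero two_ne_zero)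
    simpa [parity_simps, hw] using hodd
  have hne (c : ℤ) (hc : Even c) : a * x - c * w ≠ 0 := fun h => by
    have hodd : Odd (a * x - c * w) := (ha.mul hx).sub_even (hc.mul_right w)
    simp [h] at hodd
  have hdvd : p ∣ (a * x - b * w) * (a * x - -b * w) :=
    ⟨a ^ 2 - w ^ 2, by linear_combination a ^ 2 * hxw - w ^ 2 * hab⟩
  obtain hd | hd := hp.dvd_or_dvd hdvd
  · exact sq_eq_sq_of_prime_dvd_mul_sub_mul hp hab hxw (hne b hb) hd
  · exact sq_eq_sq_of_prime_dvd_mul_sub_mul hp (neg_sq b ▸ hab) hxw (hne (-b) hb.neg) hd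

lemma isPrimitiveRoot_gaussianInt_I : IsPrimitiveRoot (⟨0, 1⟩ : GaussianInt) 4 := by
  refine IsPrimitiveRoot.mk_of_lt _ (by norm_num) (by decide) fun l h₀ h₄ => ?_
  interval_cases l <;> decide

lemma ringHomComp_star_eq_inv {F : Type*} [Field F] [Finite F] (χ : MulChar F GaussianInt) :
    χ.ringHomComp (starRingEnd GaussianInt) = χ⁻¹ := by
  refine eq_inv_of_mul_eq_one_right (MulChar.ext fun a => ?_)
  have hnorm : (χ a).norm = 1 := (Zsqrtd.norm_eq_one_iff' (by norm_num) _).2 (a.isUnit.map χ)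
  rw [MulChar.mul_apply, MulChar.ringHomComp_apply, MulChar.one_apply_coe, starRingEnd_apply,
    ← Zsqrtd.norm_eq_mul_conj, hnorm, Int.cast_one]

variable {F : Type*} [Field F] [Fintype F]

lemma jacobiSum_mul_star_jacobiSum {χ ψ : MulChar F GaussianInt} (hχ : χ ≠ 1) (hψ : ψ ≠ 1)
    (hχψ : χ * ψ ≠ 1) :
    jacobiSum χ ψ * star (jacobiSum χ ψ) = (Fintype.card F : GaussianInt) := by
  have hinj : Function.Injective GaussianInt.toComplex := fun a b => GaussianInt.toComplex_inj.1
  have hchar : ringChar ℂ ≠ ringChar F := by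
    rw [ringChar.eq_zero]
    exact (CharP.ringChar_ne_zero_of_finite F).symm
  apply hinj
  rw [← starRingEnd_apply, ← jacobiSum_ringHomComp, ringHomComp_star_eq_inv,
    ringHomComp_star_eq_inv, map_mul, ← jacobiSum_ringHomComp, ← jacobiSum_ringHomComp,
    ← MulChar.ringHomComp_inv, ← MulChar.ringHomComp_inv, map_natCast]
  refine jacobiSum_mul_jacobiSum_inv hchar ((MulChar.ringHomComp_ne_one_iff hinj).2 hχ)
    ((MulChar.ringHomComp_ne_one_iff hinj).2 hψ) ?_
  rw [← MulChar.ringHomComp_mul]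
  exact (MulChar.ringHomComp_ne_one_iff hinj).2 hχψ

lemma odd_re_and_even_im_jacobiSum {χ ψ : MulChar F GaussianInt} (hχ : χ ^ 4 = 1) (hψ : ψ ^ 4 = 1)
    (hF : 4 ∣ Fintype.card F - 1) : Odd (jacobiSum χ ψ).re ∧ Even (jacobiSum χ ψ).im := by
  obtain ⟨z, -, hz⟩ := exists_jacobiSum_eq_neg_one_add (n := 4) (by norm_num) hχ hψ hF
    isPrimitiveRoot_gaussianInt_I
  have hsq : ((⟨0, 1⟩ : GaussianInt) - 1) ^ 2 = ⟨0, -2⟩ := by decide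
  rw [hz, hsq]
  refine ⟨⟨z.im - 1, ?_⟩, ⟨-z.re, ?_⟩⟩
  · simp
    ring
  · simp
    ring

variable {p k : ℕ} [Fact p.Prime]

lemma exists_ringHomComp_eq_teichmuller_pow (hk : 1 ≤ k) (hpk : p = 4 * k + 1) :
    ∃ (χ : MulChar (ZMod p) GaussianInt) (f : GaussianInt →+* ZMod (p ^ 3)),
      orderOf χ = 4 ∧ χ.ringHomComp f = teichmuller p 3 ^ (3 * k) := by
  obtain ⟨g, hg⟩ := IsCyclic.exists_generator (α := (ZMod p)ˣ)
  have horder : orderOf g = 4 * k := by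
    rw [orderOf_eq_card_of_forall_mem_zpowers hg, Nat.card_eq_fintype_card, ZMod.card_units, hpk,
      Nat.add_sub_cancel]
  have hτ₄ : teichmuller p 3 g ^ (4 * k) = 1 := by
    rw [← MulChar.pow_apply_coe, show 4 * k = p - 1 by omega, teichmuller_pow_card_sub_one,
      MulChar.one_apply_coe]
  have hτ₂ : teichmuller p 3 g ^ (2 * k) = -1 := by
    have hunit : IsUnit (teichmuller p 3 g ^ (2 * k) - 1) := by
      apply isUnit_of_reduction_ne_zero
      rw [map_sub, map_pow, reduction_teichmuller, map_one, sub_ne_zero]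
      intro h
      have hdvd := orderOf_dvd_of_pow_eq_one (Units.ext (by simpa using h) : g ^ (2 * k) = 1)
      have := Nat.le_of_dvd (by omega) hdvd
      omega
    refine eq_neg_of_add_eq_zero_left (hunit.mul_right_eq_zero.1 ?_)
    linear_combination hτ₄
  have hI := isPrimitiveRoot_gaussianInt_I
  obtain ⟨χ, hχ⟩ : ∃ χ : MulChar (ZMod p) GaussianInt, χ g = ⟨0, 1⟩ := by
    suffices hroot : (hI.isUnit four_ne_zero).unit ∈ rootsOfUnity (Fintype.card (ZMod p)ˣ) _ from
      ⟨MulChar.ofRootOfUnity hroot hg, MulChar.ofRootOfUnity_spec hroot hg⟩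
    rw [mem_rootsOfUnity, ZMod.card_units, hpk, Nat.add_sub_cancel, pow_mul]
    exact (congrArg (· ^ k) (Units.ext hI.pow_eq_one)).trans (one_pow k)
  refine ⟨χ, Zsqrtd.lift ⟨teichmuller p 3 g ^ (3 * k), ?_⟩, ?_, ?_⟩
  · push_cast
    linear_combination teichmuller p 3 g ^ (2 * k) * hτ₄ + hτ₂
  · have hpow (j : ℕ) : χ ^ j = 1 ↔ (⟨0, 1⟩ : GaussianInt) ^ j = 1 := by
      rw [MulChar.eq_iff hg, MulChar.pow_apply_coe, hχ, MulChar.one_apply_coe]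
    exact (orderOf_eq_orderOf_iff.2 hpow).trans hI.eq_orderOf.symm
  · rw [MulChar.eq_iff hg, MulChar.ringHomComp_apply, hχ, MulChar.pow_apply_coe]
    simp

lemma exists_mul_eq_and_add_sq_eq (hk : 1 ≤ k) (hpk : p = 4 * k + 1) {x y : ℤ}
    (hxy : (p : ℤ) = x ^ 2 + 4 * y ^ 2) :
    ∃ u v : ZMod (p ^ (3 : ℕ)), 8 * u = 4 * k * (-1) ^ k * (15 * (2 * k).choose k -
        20 * (6 * k).choose k + 6 * (10 * k).choose k + 3 * (5 * k).centralBinom) ∧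
      u * v = p ∧ (u + v) ^ 2 = 4 * (x : ZMod (p ^ 3)) ^ 2 := by
  obtain ⟨χ, f, hχ, hf⟩ := exists_ringHomComp_eq_teichmuller_pow hk hpk
  have hχ₄ : χ ^ 4 = 1 := hχ ▸ pow_orderOf_eq_one χ
  have hne {j : ℕ} (h₀ : j ≠ 0) (hj : j < 4) : χ ^ j ≠ 1 := pow_ne_one_of_lt_orderOf h₀ (hχ ▸ hj)
  set J := jacobiSum χ (χ ^ 2) with hJ
  have hnorm : J * star J = p := by
    rw [hJ, jacobiSum_mul_star_jacobiSum (pow_one χ ▸ hne one_ne_zero (by norm_num))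
      (hne two_ne_zero (by norm_num)) (pow_succ' χ 2 ▸ hne three_ne_zero (by norm_num)), ZMod.card]
  obtain ⟨hodd, heven⟩ : Odd J.re ∧ Even J.im :=
    odd_re_and_even_im_jacobiSum hχ₄ (by rw [← pow_mul, mul_comm, pow_mul, hχ₄, one_pow])
      ⟨k, by rw [ZMod.card, hpk, Nat.add_sub_cancel]⟩
  have hre : J.re ^ 2 = x ^ 2 := by
    refine sq_eq_sq_of_sq_add_sq_eq_prime (w := 2 * y) (Nat.prime_iff_prime_int.1 Fact.out) ?_
      (by rw [hxy]; ring) hodd heven (even_two_mul y)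
    have := congrArg Zsqrtd.re hnorm
    simp only [Zsqrtd.re_mul, Zsqrtd.re_star, Zsqrtd.im_star, Zsqrtd.re_natCast] at this
    linear_combination this
  have hfJ : f J = jacobiSum (teichmuller p 3 ^ (3 * k)) (teichmuller p 3 ^ (2 * k)) := by
    have hsq : (teichmuller p 3 ^ (3 * k)) ^ 2 = teichmuller p 3 ^ (2 * k) := by
      rw [← pow_mul, show 3 * k * 2 = 2 * k + (p - 1) by omega, pow_add,
        teichmuller_pow_card_sub_one, mul_one]
    rw [hJ, ← jacobiSum_ringHomComp, ← MulChar.ringHomComp_pow, hf, hsq]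
  refine ⟨f J, f (star J), hfJ ▸ eight_mul_jacobiSum_teichmuller hk hpk, ?_, ?_⟩
  · rw [← map_mul, hnorm, map_natCast]
  · have htrace : J + star J = ((2 * J.re : ℤ) : GaussianInt) := by
      rw [Zsqrtd.ext_iff]
      simp [two_mul]
    rw [← map_add, htrace, map_intCast, ← Int.cast_pow, mul_pow, hre]
    push_cast
    ring

end GaussianJacobiSum

section OneModFour

lemma fracSum_legendreCoeff_four_one (k : ℕ) {P : ℚ} (hP : P = 4 * k + 1) :
    P * fracSum (legendreCoeff (2 * k)) (2 * k) 4 1 * evenProd k P = oddProd k P := by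
  have hden : ∏ j ∈ range (2 * k + 1), (4 * (j : ℚ) + 1) = P * evenProd k P := by
    rw [← prod_four_mul_add_evenProd]
    exact prod_congr rfl fun j _ => by rw [hP]; ring
  have hnum : ∏ j ∈ range (2 * k), (4 * ((j : ℚ) + 1) - 1) = oddProd k P := by
    rw [← prod_four_mul_add_oddProd]
    exact prod_congr rfl fun j _ => by rw [hP]; ring
  have hne : P * evenProd k P ≠ 0 := by
    rw [← hden]
    exact prod_ne_zero_iff.2 fun j _ => by positivity
  rw [fracSum_legendreCoeff _ fun j => by positivity, hnum, hden, mul_right_comm,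
    mul_div_cancel₀ _ hne]

lemma perturbedCoeff_mul_four_pow (m k : ℕ) :
    perturbedCoeff m k * (4 ^ k * (k ! : ℚ) ^ 2) =
      legendreCoeff m k * ∏ i ∈ range k, (4 * ((i : ℚ) + 1) ^ 2 - (2 * m + 1) ^ 2) := by
  rw [perturbedCoeff, mul_assoc, ← prod_range_add_one_eq_factorial, Nat.cast_prod, ← prod_pow,
    ← card_range k, ← prod_const, card_range, ← prod_mul_distrib, ← prod_mul_distrib]
  congr 1
  refine prod_congr rfl fun i _ => ?_
  push_cast
  field_simp

variable {p k : ℕ} [hp : Fact p.Prime]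

lemma isUnit_natCast_factorial {m : ℕ} (n : ℕ) (hm : m < p) : IsUnit (m ! : ZMod (p ^ n)) := by
  rw [ZMod.isUnit_iff_coprime]
  exact ((hp.out.coprime_iff_not_dvd.2 (by rwa [hp.out.dvd_factorial, not_le])).pow_left n).symm

lemma padicNorm_four_pow_mul_factorial_sq_eq_one (hp2 : p ≠ 2) (hk : k < p) :
    padicNorm p (4 ^ k * (k ! : ℚ) ^ 2) = 1 := by
  have hfact : padicNorm p (k ! : ℚ) = 1 :=
    padicNorm_natCast_eq_one (by rwa [hp.out.dvd_factorial, not_le])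
  rw [show (4 : ℚ) = 2 ^ 2 by norm_num, padicNorm.mul]
  simp only [IsAbsoluteValue.abv_pow (padicNorm p), hfact, padicNorm_two hp2, one_pow, mul_one]

lemma prime_mul_fracSum_four_one_sub_mem (hpk : p = 4 * k + 1) :
    p * fracSum (perturbedCoeff (2 * k)) (2 * k) 4 1 -
      (p * fracSum (legendreCoeff (2 * k)) (2 * k) 4 1 +
        (perturbedCoeff (2 * k) k - legendreCoeff (2 * k) k)) ∈ padicIdeal p 3 := by
  have hp0 : (p : ℚ) ≠ 0 := mod_cast hp.out.ne_zero
  have hk : k ∈ range (2 * k + 1) := mem_range.2 (by omega)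
  have hexact : p * (perturbedCoeff (2 * k) k / (4 * k + 1) -
      legendreCoeff (2 * k) k / (4 * k + 1)) =
        perturbedCoeff (2 * k) k - legendreCoeff (2 * k) k := by
    rw [← sub_div, show 4 * (k : ℚ) + 1 = p by exact_mod_cast hpk.symm, mul_div_cancel₀ _ hp0]
  rw [← hexact, ← sub_sub, ← mul_sub, fracSum, fracSum, ← sum_sub_distrib,
    ← add_sum_erase _ _ hk, mul_add, add_sub_cancel_left, prime_mul_mem_padicIdeal_iff]
  refine sum_mem fun j hj => ?_
  obtain ⟨hjk, hj⟩ := mem_erase.1 hj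
  rw [mem_range] at hj
  have hunit : padicNorm p (4 * j + 1 : ℕ) = 1 :=
    padicNorm_natCast_eq_one
      (not_dvd_of_lt_three_mul (by omega) (by omega) (by omega) (by omega))
  push_cast at hunit
  rw [← sub_div, div_mem_padicIdeal_iff hunit]
  exact perturbedCoeff_sub_legendreCoeff_mem (by omega) (by omega)

lemma exists_zmod_oddProd_mul_add_eq (hpk : p = 4 * k + 1) {x y : ℤ}
    (hxy : (p : ℤ) = x ^ 2 + 4 * y ^ 2) :
    ∃ u v : ZMod (p ^ (3 : ℕ)), IsUnit u ∧ u * v = p ∧ (u + v) ^ 2 = 4 * (x : ZMod (p ^ 3)) ^ 2 ∧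
      oddProd k (p : ZMod (p ^ 3)) * (4 ^ k * k ! ^ 2) +
        (-1) ^ k * (2 * k).choose k * (3 * k).choose k *
          (∏ i ∈ range k, (4 * ((i : ZMod (p ^ 3)) + 1) ^ 2 - p ^ 2) - 4 ^ k * k ! ^ 2) *
          evenProd k (p : ZMod (p ^ 3)) =
        u ^ 2 * evenProd k (p : ZMod (p ^ 3)) * (4 ^ k * k ! ^ 2) := by
  have hk : 1 ≤ k := by
    have := hp.out.two_le
    omega
  have hfact {n : ℕ} (hn : n ≤ 4 * k) : IsUnit (n ! : ZMod (p ^ 3)) :=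
    isUnit_natCast_factorial 3 (by omega)
  have h₂ : IsUnit (2 : ZMod (p ^ 3)) := mod_cast hfact (by omega : 2 ≤ 4 * k)
  have h₃ : IsUnit (3 : ZMod (p ^ 3)) := by
    have h := hfact (by omega : 3 ≤ 4 * k)
    rw [Nat.factorial_succ, Nat.cast_mul] at h
    exact mod_cast isUnit_of_mul_isUnit_left h
  have hchoose : IsUnit ((2 * k).choose k : ZMod (p ^ 3)) := by
    have h := hfact (by omega : 2 * k ≤ 4 * k)
    rw [natCast_factorial_two_mul] at h
    exact isUnit_of_mul_isUnit_left h
  obtain ⟨c, hc⟩ := (h₂.mul h₂).exists_right_inv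
  have hq : (p * c : ZMod (p ^ 3)) ^ 3 = 0 := by
    rw [mul_pow, natCast_self_pow_eq_zero, zero_mul]
  have hq₄ : 4 * (p * c : ZMod (p ^ 3)) = p := by linear_combination p * hc
  have hkq : 4 * (k : ZMod (p ^ 3)) + 1 = 4 * (p * c) := by
    rw [hq₄]
    exact_mod_cast congrArg (Nat.cast : ℕ → ZMod (p ^ 3)) hpk.symm
  obtain ⟨u, v, h8, huv, hadd⟩ := exists_mul_eq_and_add_sq_eq hk hpk hxy
  obtain ⟨_, _, h⟩ := exists_logExpansion hq hk hkq (hfact le_rfl)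
  have hmain := h.oddProd_mul_add_eq hq hkq (hfact le_rfl) h₂ h₃ h8
  rw [hq₄] at hmain
  refine ⟨u, v, ?_, huv, hadd, hmain⟩
  rw [h.eq_neg_one_pow_mul_truncExp hq hkq (hfact le_rfl) h₂ h₃ h8]
  exact ((isUnit_one.neg.pow k).neg.mul hchoose).mul (isUnit_truncExp hq _)

lemma prime_mul_fracSum_sub_sq_mem (hpk : p = 4 * k + 1) {U : ℤ}
    (hU : oddProd k (p : ZMod (p ^ (3 : ℕ))) * (4 ^ k * k ! ^ 2) +
      (-1) ^ k * (2 * k).choose k * (3 * k).choose k *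
        (∏ i ∈ range k, (4 * ((i : ZMod (p ^ 3)) + 1) ^ 2 - p ^ 2) - 4 ^ k * k ! ^ 2) *
        evenProd k (p : ZMod (p ^ 3)) =
      (U : ZMod (p ^ 3)) ^ 2 * evenProd k (p : ZMod (p ^ 3)) * (4 ^ k * k ! ^ 2)) :
    p * fracSum (perturbedCoeff (2 * k)) (2 * k) 4 1 - U ^ 2 ∈ padicIdeal p 3 := by
  suffices h : p * fracSum (legendreCoeff (2 * k)) (2 * k) 4 1 +
      (perturbedCoeff (2 * k) k - legendreCoeff (2 * k) k) - U ^ 2 ∈ padicIdeal p 3 by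
    simpa using add_mem (prime_mul_fracSum_four_one_sub_mem hpk) h
  have hp' : (p : ℚ) = 4 * k + 1 := mod_cast hpk
  rw [← mul_mem_padicIdeal_iff (padicNorm_evenProd_eq_one (by omega) (by omega : k < p)),
    ← mul_mem_padicIdeal_iff
      (padicNorm_four_pow_mul_factorial_sq_eq_one (by omega) (by omega : k < p))]
  have hmem := intCast_mem_padicIdeal_of_zmod (p := p) (r := 3)
    (z := oddProd k (p : ℤ) * (4 ^ k * k ! ^ 2) + (-1) ^ k * (2 * k).choose k * (3 * k).choose k *
      (∏ i ∈ range k, (4 * ((i : ℤ) + 1) ^ 2 - p ^ 2) - 4 ^ k * k ! ^ 2) * evenProd k (p : ℤ) -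
        U ^ 2 * evenProd k (p : ℤ) * (4 ^ k * k ! ^ 2))
    (by push_cast; rw [hU, sub_self])
  have hpert := perturbedCoeff_mul_four_pow (2 * k) k
  rw [show 2 * ((2 * k : ℕ) : ℚ) + 1 = p by rw [hp']; push_cast; ring] at hpert
  have hcoeff : legendreCoeff (2 * k) k = (-1) ^ k * (2 * k).choose k * (3 * k).choose k := by
    rw [legendreCoeff, show 2 * k + k = 3 * k by ring]
  convert hmem using 1
  push_cast
  rw [← hcoeff]
  linear_combination 4 ^ k * (k ! : ℚ) ^ 2 * fracSum_legendreCoeff_four_one k hp' +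
    evenProd k (p : ℚ) * hpert

lemma exists_int_prime_mul_fracSum_sub_sq_mem (hpk : p = 4 * k + 1) {x y : ℤ}
    (hxy : (p : ℤ) = x ^ 2 + 4 * y ^ 2) :
    ∃ U V : ℤ, padicNorm p U = 1 ∧ (U * V - p : ℚ) ∈ padicIdeal p 3 ∧
      ((U + V) ^ 2 - 4 * x ^ 2 : ℚ) ∈ padicIdeal p 3 ∧
      p * fracSum (perturbedCoeff (2 * k)) (2 * k) 4 1 - U ^ 2 ∈ padicIdeal p 3 := by
  obtain ⟨u, v, hu, huv, hadd, hmain⟩ := exists_zmod_oddProd_mul_add_eq hpk hxy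
  obtain ⟨U, rfl⟩ := ZMod.intCast_surjective u
  obtain ⟨V, rfl⟩ := ZMod.intCast_surjective v
  refine ⟨U, V, ?_, ?_, ?_, prime_mul_fracSum_sub_sq_mem hpk hmain⟩
  · rw [padicNorm.int_eq_one_iff, ← (Nat.prime_iff_prime_int.1 hp.out).coprime_iff_not_dvd]
    rwa [ZMod.coe_int_isUnit_iff_isCoprime, Nat.cast_pow,
      IsCoprime.pow_left_iff three_pos] at hu
  · exact mod_cast intCast_mem_padicIdeal_of_zmod (p := p) (r := 3) (z := U * V - p)
      (by simp [huv])
  · exact mod_cast intCast_mem_padicIdeal_of_zmod (p := p) (r := 3) (z := (U + V) ^ 2 - 4 * x ^ 2)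
      (by push_cast; rw [hadd, sub_self])

lemma prime_mul_fracSum_four_three_sub_mem_of_one (hpk : p = 4 * k + 1) :
    p * (fracSum (perturbedCoeff (2 * k)) (2 * k) 4 3 -
      fracSum (legendreCoeff (2 * k)) (2 * k) 4 3) ∈ padicIdeal p 3 := by
  have := hp.out.two_le
  rw [prime_mul_mem_padicIdeal_iff]
  exact mod_cast fracSum_perturbedCoeff_sub_mem_two (m := 2 * k) (a := 4) (b := 3) (by omega)
    fun j hj => not_dvd_of_lt_three_mul (by omega) (by omega) (by omega) (by omega)

lemma prime_mul_fracSum_legendreCoeff_sub_mem {u : ℚ} (hpk : p = 4 * k + 1)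
    (h₁ : p * fracSum (perturbedCoeff (2 * k)) (2 * k) 4 1 - u ∈ padicIdeal p 1) :
    p * fracSum (legendreCoeff (2 * k)) (2 * k) 4 1 - u ∈ padicIdeal p 1 := by
  have := hp.out.two_le
  have hd (j : ℕ) (hj : j ≤ 2 * k) (hdvd : p ∣ 4 * j + 1) : 4 * j + 1 = p := by
    by_contra hne
    exact not_dvd_of_lt_three_mul (by omega) (by omega) hne (by omega) hdvd
  have h := natCast_mul_mem_padicIdeal p
    (fracSum_perturbedCoeff_sub_mem_one (m := 2 * k) (by omega) hd)
  convert sub_mem h₁ h using 1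
  push_cast
  ring

lemma add_sq_mem_of_mul_mul_eq {a b u v : ℚ} (hab : a * b * (4 * p ^ 2 - 1) = p ^ 2)
    (hu : padicNorm p u = 1) (huv : u * v - p ∈ padicIdeal p 3) (hau : a - u ^ 2 ∈ padicIdeal p 1) :
    b + v ^ 2 ∈ padicIdeal p 3 := by
  have hu₂ : padicNorm p (u ^ 2) = 1 := by rw [sq, padicNorm.mul, hu, one_mul]
  have ha : padicNorm p a = 1 := padicNorm_eq_one_of_sub_mem hu₂ hau
  have hp₂ := prime_pow_mem_padicIdeal (p := p) 2
  have hp₄ : 4 * (p : ℚ) ^ 2 ∈ padicIdeal p 2 := mod_cast natCast_mul_mem_padicIdeal 4 hp₂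
  have hunit : padicNorm p (4 * p ^ 2 - 1) = 1 :=
    padicNorm_eq_one_of_sub_mem (u := -1) (by simp)
      (by simpa using padicIdeal_antitone one_le_two hp₄)
  have huv₀ : u * v + p ∈ padicIdeal p 0 := by
    convert add_mem (padicIdeal_antitone (Nat.zero_le 3) huv) (natCast_mem_padicIdeal (2 * p))
      using 1
    push_cast
    ring
  rw [← mul_mem_padicIdeal_iff hu₂, ← mul_mem_padicIdeal_iff ha, ← mul_mem_padicIdeal_iff hunit]
  have hlead := padicIdeal_antitone (show 3 ≤ 2 + 2 by norm_num) (mul_mem_padicIdeal hp₄ hp₂)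
  have hsq := (mul_mem_padicIdeal_iff hunit).2
    ((mul_mem_padicIdeal_iff ha).2 (integral_mul_mem_padicIdeal huv₀ huv))
  have hdiff := padicIdeal_antitone (show 3 ≤ 2 + 1 by norm_num) (mul_mem_padicIdeal hp₂ hau)
  convert add_mem (sub_mem ((mul_mem_padicIdeal_iff ha).2 hlead) hdiff) hsq using 1
  linear_combination u ^ 2 * hab

lemma prime_mul_fracSum_four_three_add_sq_mem (hpk : p = 4 * k + 1) {u v : ℚ}
    (hu : padicNorm p u = 1) (huv : u * v - p ∈ padicIdeal p 3)
    (h₁ : p * fracSum (perturbedCoeff (2 * k)) (2 * k) 4 1 - u ^ 2 ∈ padicIdeal p 3) :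
    p * fracSum (perturbedCoeff (2 * k)) (2 * k) 4 3 + v ^ 2 ∈ padicIdeal p 3 := by
  have hmul : p * fracSum (legendreCoeff (2 * k)) (2 * k) 4 1 *
      (p * fracSum (legendreCoeff (2 * k)) (2 * k) 4 3) * (4 * (p : ℚ) ^ 2 - 1) = p ^ 2 := by
    have h := fracSum_legendreCoeff_mul (2 * k)
    rw [hpk]
    push_cast at h ⊢
    linear_combination (4 * k + 1 : ℚ) ^ 2 * h
  convert add_mem (prime_mul_fracSum_four_three_sub_mem_of_one hpk)
    (add_sq_mem_of_mul_mul_eq hmul hu huv (prime_mul_fracSum_legendreCoeff_sub_mem hpk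
      (padicIdeal_antitone (by norm_num) h₁))) using 1
  ring

lemma mem_padicIdeal_of_mul_sub_mem {u v : ℚ} (hu : padicNorm p u = 1)
    (huv : u * v - p ∈ padicIdeal p 3) : v ∈ padicIdeal p 1 := by
  rw [← mul_mem_padicIdeal_iff hu, mul_comm]
  simpa using add_mem (padicIdeal_antitone (by norm_num) huv) (prime_pow_mem_padicIdeal (p := p) 1)

lemma sixteen_mul_sq_mul_sq_add_sq_mem {u v x y : ℚ} (hxy : (p : ℚ) = x ^ 2 + 4 * y ^ 2)
    (hu : padicNorm p u = 1) (huv : u * v - p ∈ padicIdeal p 3)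
    (hadd : (u + v) ^ 2 - 4 * x ^ 2 ∈ padicIdeal p 3) :
    16 * y ^ 2 * v ^ 2 + p ^ 2 ∈ padicIdeal p 3 := by
  have hv := mem_padicIdeal_of_mul_sub_mem hu huv
  have hv₂ : v ^ 2 ∈ padicIdeal p 2 := by simpa [sq] using mul_mem_padicIdeal hv hv
  have hv₀ := padicIdeal_antitone (Nat.zero_le 2) hv₂
  have hpv := natCast_mul_mem_padicIdeal 2 (prime_mul_mem_padicIdeal_iff.2 hv₂)
  have hv₄ := padicIdeal_antitone (show 3 ≤ 2 + 2 by norm_num) (mul_mem_padicIdeal hv₂ hv₂)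
  have hfactor : u * v + p + 2 * v ^ 2 ∈ padicIdeal p 0 := by
    convert add_mem (add_mem (padicIdeal_antitone (Nat.zero_le 3) huv)
      (natCast_mem_padicIdeal (2 * p))) (natCast_mul_mem_padicIdeal 2 hv₀) using 1
    push_cast
    ring
  convert sub_mem (add_mem (sub_mem hpv hv₄) (integral_mul_mem_padicIdeal hv₀ hadd))
    (integral_mul_mem_padicIdeal hfactor huv) using 1
  push_cast
  linear_combination -4 * v ^ 2 * hxy

lemma padicNorm_eq_one_of_eq_sq_add {x y : ℤ} (hxy : (p : ℤ) = x ^ 2 + 4 * y ^ 2) :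
    padicNorm p y = 1 := by
  have hprime := Nat.prime_iff_prime_int.1 hp.out
  rw [padicNorm.int_eq_one_iff]
  intro hy
  have hx : (p : ℤ) ∣ x := by
    refine hprime.dvd_of_dvd_pow (n := 2) ?_
    rw [show x ^ 2 = p - 4 * y ^ 2 by linarith]
    exact dvd_sub_self_left.2 ((dvd_pow hy two_ne_zero).mul_left 4)
  have hsq : (p : ℤ) ^ 2 ∣ p := by
    nth_rw 2 [hxy]
    exact dvd_add (pow_dvd_pow_of_dvd hx 2) ((pow_dvd_pow_of_dvd hy 2).mul_left 4)
  exact hprime.not_isUnit ((hprime.irreducible.squarefree) _ (by rwa [← sq]))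

lemma sq_div_four_add_mem {u v : ℚ} {x y : ℤ} (hp2 : p ≠ 2) (hxy : (p : ℤ) = x ^ 2 + 4 * y ^ 2)
    (hu : padicNorm p u = 1) (huv : u * v - p ∈ padicIdeal p 3)
    (hadd : (u + v) ^ 2 - 4 * (x : ℚ) ^ 2 ∈ padicIdeal p 3) :
    v ^ 2 / 4 + (p : ℚ) ^ 2 / (64 * y ^ 2) ∈ padicIdeal p 3 := by
  have hy := padicNorm_eq_one_of_eq_sq_add hxy
  have hy₀ : (y : ℚ) ≠ 0 := by
    rintro h
    simp [h] at hy
  have hunit : padicNorm p (64 * (y : ℚ) ^ 2) = 1 := by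
    rw [show (64 : ℚ) = 2 ^ 6 by norm_num, padicNorm.mul]
    simp only [IsAbsoluteValue.abv_pow (padicNorm p), hy, padicNorm_two hp2, one_pow, mul_one]
  rw [← mul_mem_padicIdeal_iff hunit]
  convert sixteen_mul_sq_mul_sq_add_sq_mem (x := x) (y := y) (by exact_mod_cast hxy) hu huv hadd
    using 1
  field_simp
  ring

theorem sum_seqT_one_mod_four (hpk : p = 4 * k + 1) {x y : ℤ} (hxy : (p : ℤ) = x ^ 2 + 4 * y ^ 2) :
    ∑ n ∈ range p, (n : ℚ) ^ 2 * seqT n / 4 ^ n - -4 * (y : ℚ) ^ 2 ∈ padicIdeal p 3 ∧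
    ∑ n ∈ range p, (n : ℚ) ^ 3 * seqT n / 4 ^ n -
      (2 * (y : ℚ) ^ 2 + p / 4 + p ^ 2 / (64 * y ^ 2)) ∈ padicIdeal p 3 := by
  have hpm : p = 2 * (2 * k) + 1 := by omega
  have hp2 : p ≠ 2 := by omega
  have h₂ : padicNorm p 2 = 1 := padicNorm_two hp2
  have hxy' : (p : ℚ) = x ^ 2 + 4 * y ^ 2 := by exact_mod_cast hxy
  obtain ⟨U, V, hU, hUV, hadd, h₁⟩ := exists_int_prime_mul_fracSum_sub_sq_mem hpk hxy
  have h₃ := prime_mul_fracSum_four_three_add_sq_mem hpk hU hUV h₁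
  have hV := sq_div_four_add_mem hp2 hxy hU hUV hadd
  have hX₃ : p * fracSum (perturbedCoeff (2 * k)) (2 * k) 4 3 ∈ padicIdeal p 1 := by
    have hv := mem_padicIdeal_of_mul_sub_mem hU hUV
    have hv₂ := padicIdeal_antitone (show 1 ≤ 1 + 1 by norm_num) (mul_mem_padicIdeal hv hv)
    simpa [sq] using sub_mem (padicIdeal_antitone (by norm_num) h₃) hv₂
  have hcube : (p : ℚ) ^ 3 * fracSum (perturbedCoeff (2 * k)) (2 * k) 4 3 ∈ padicIdeal p 3 := by
    convert padicIdeal_antitone (show 3 ≤ 2 + 1 by norm_num)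
      (mul_mem_padicIdeal (prime_pow_mem_padicIdeal 2) hX₃) using 1
    ring
  have hdiv₄ {a : ℚ} (ha : a ∈ padicIdeal p 3) : a / 2 / 2 ∈ padicIdeal p 3 := by
    rwa [div_mem_padicIdeal_iff h₂, div_mem_padicIdeal_iff h₂]
  have hdiv₂ {a : ℚ} (ha : a ∈ padicIdeal p 3) : a / 2 ∈ padicIdeal p 3 :=
    (div_mem_padicIdeal_iff h₂).2 ha
  constructor
  · convert add_mem (sum_sq_mul_seqT_div_sub_mem hpm le_rfl hcube)
      (sub_mem (hdiv₄ (add_mem (sub_mem h₁ h₃) hadd)) (hdiv₂ hUV)) using 1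
    linear_combination -hxy'
  · have hmain := hdiv₂ (hdiv₄ (sub_mem (sub_mem (natCast_mul_mem_padicIdeal 3 h₃) h₁) hadd))
    convert add_mem (sum_cube_mul_seqT_div_sub_mem hpm le_rfl hcube)
      (sub_mem (add_mem hmain (hdiv₄ hUV)) hV) using 1
    push_cast
    linear_combination 1 / 2 * hxy'

end OneModFour

end SeqT

theorem statement17 (p : ℕ) (hp : p.Prime) (hp2 : p ≠ 2) :
    (∀ x y : ℤ, p % 4 = 1 → (p : ℤ) = x^2 + 4*y^2 →
      ratCongr p 3
        (∑ n ∈ Finset.range p, (n:ℚ)^2 * seqT n / 4^n)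
        (-4*(y:ℚ)^2) ∧
      ratCongr p 3
        (∑ n ∈ Finset.range p, (n:ℚ)^3 * seqT n / 4^n)
        (2*(y:ℚ)^2 + (p:ℚ)/4 + (p:ℚ)^2/(64*(y:ℚ)^2))) ∧
    (p % 4 = 3 →
      ratCongr p 2
        (∑ n ∈ Finset.range p, (n:ℚ)^2 * seqT n / 4^n)
        (-(1/4)*R1 p - (p:ℚ)/2) ∧
      ratCongr p 2
        (∑ n ∈ Finset.range p, (n:ℚ)^3 * seqT n / 4^n)
        (3/8*R1 p + (p:ℚ)/2)) := by
  have : Fact p.Prime := ⟨hp⟩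
  constructor
  · intro x y h₁ hxy
    obtain ⟨k, hk⟩ : ∃ k, p = 4 * k + 1 := ⟨p / 4, by omega⟩
    exact (SeqT.sum_seqT_one_mod_four hk hxy).imp SeqT.ratCongr_of_sub_mem SeqT.ratCongr_of_sub_mem
  · intro h₃
    obtain ⟨k, hk⟩ : ∃ k, p = 4 * k + 3 := ⟨p / 4, by omega⟩
    exact (SeqT.sum_seqT_three_mod_four hk).imp SeqT.ratCongr_of_sub_mem SeqT.ratCongr_of_sub_mem
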